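/- For every integer m ≥ 2 there exist a triconnected planar simple graph G with maximum degree at most 4 on n = 3m vertices and a cycle C in G such that every planar octilinear drawing of G in which the images of all vertices not on C lie in the interior of C has at least n/3 − 1 bends in total. -/

import Mathlib

/-!
Common definitions: polylines, octilinear drawings, planarity, triconnectivity.
-/

/-- A polyline: a sequence of `len + 1` points `pt 0, pt 1, …, pt len`,
consisting of `len ≥ 1` segments. (Values of `pt` beyond `len` are irrelevant.) -/
structure Polyline where
  len : ℕ
  len_pos : 1 ≤ len
  pt : ℕ → ℝ × ℝ

namespace Polyline

/-- The number of bends of a polyline (its interior points `pt 1, …, pt (len-1)`). -/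
def bends (P : Polyline) : ℕ := P.len - 1

/-- Piecewise-linear parametrization of the polyline on the interval `[0, len]`. -/
noncomputable def param (P : Polyline) (s : ℝ) : ℝ × ℝ :=
  P.pt ⌊s⌋.toNat + (s - (⌊s⌋.toNat : ℝ)) • (P.pt (⌊s⌋.toNat + 1) - P.pt ⌊s⌋.toNat)

/-- The image (trace) of the polyline in the plane. -/
noncomputable def image (P : Polyline) : Set (ℝ × ℝ) :=
  P.param '' Set.Icc 0 (P.len : ℝ)

/-- The polyline is a simple curve. -/
def Simple (P : Polyline) : Prop :=
  Set.InjOn P.param (Set.Icc 0 (P.len : ℝ))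

/-- Every segment is nondegenerate, and no two consecutive segments are collinear. -/
def Proper (P : Polyline) : Prop :=
  (∀ i < P.len, P.pt i ≠ P.pt (i + 1)) ∧
  (∀ i, i + 1 < P.len → ¬ Collinear ℝ ({P.pt i, P.pt (i + 1), P.pt (i + 2)} : Set (ℝ × ℝ)))

/-- The segment from `a` to `b` is horizontal, vertical, or diagonal at `45°`. -/
def OctiSeg (a b : ℝ × ℝ) : Prop :=
  b.2 - a.2 = 0 ∨ b.1 - a.1 = 0 ∨ b.2 - a.2 = b.1 - a.1 ∨ b.2 - a.2 = -(b.1 - a.1)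

/-- The polyline is octilinear: proper, with all segments in octilinear directions. -/
def Octilinear (P : Polyline) : Prop :=
  P.Proper ∧ ∀ i < P.len, OctiSeg (P.pt i) (P.pt (i + 1))

end Polyline

/-- Embedding of the integer grid into the real plane. -/
def toR (p : ℤ × ℤ) : ℝ × ℝ := ((p.1 : ℝ), (p.2 : ℝ))

/-- A polyline drawing of a simple graph `G` in the plane:
an injective placement of the vertices and, for each edge, a polyline whose
endpoints are the points of the edge's endvertices, with nondegenerate segments
and no two consecutive segments collinear. -/
structure PolyDrawing {V : Type*} (G : SimpleGraph V) where
  pos : V → ℝ × ℝ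
  inj : Function.Injective pos
  poly : Sym2 V → Polyline
  ends : ∀ u v, G.Adj u v →
    ({(poly s(u, v)).pt 0, (poly s(u, v)).pt (poly s(u, v)).len} : Set (ℝ × ℝ)) =
      {pos u, pos v}
  proper : ∀ e ∈ G.edgeSet, (poly e).Proper

/-- A polyline drawing is planar: every edge-polyline is a simple curve meeting the
vertex points exactly in its two endpoints, and polylines of distinct edges intersect
only in images of common endvertices. -/
def PolyDrawing.IsPlanar {V : Type*} {G : SimpleGraph V} (D : PolyDrawing G) : Prop :=
  (∀ e ∈ G.edgeSet, (D.poly e).Simple) ∧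
  (∀ u v, G.Adj u v →
    (D.poly s(u, v)).image ∩ Set.range D.pos = {D.pos u, D.pos v}) ∧
  (∀ e ∈ G.edgeSet, ∀ e' ∈ G.edgeSet, e ≠ e' →
    (D.poly e).image ∩ (D.poly e').image ⊆ D.pos '' {w | w ∈ e ∧ w ∈ e'})

/-- A simple graph is planar if it admits a planar polyline drawing in `ℝ²`. -/
def GraphPlanar {V : Type*} (G : SimpleGraph V) : Prop :=
  ∃ D : PolyDrawing G, D.IsPlanar

/-- An octilinear drawing of a simple graph `G`: vertices are placed injectively on the
integer grid and each edge is drawn as an octilinear polyline between its endvertices. -/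
structure OctiDrawing {V : Type*} (G : SimpleGraph V) where
  pos : V → ℤ × ℤ
  inj : Function.Injective pos
  poly : Sym2 V → Polyline
  ends : ∀ u v, G.Adj u v →
    ({(poly s(u, v)).pt 0, (poly s(u, v)).pt (poly s(u, v)).len} : Set (ℝ × ℝ)) =
      {toR (pos u), toR (pos v)}
  octi : ∀ e ∈ G.edgeSet, (poly e).Octilinear

/-- An octilinear drawing is planar: every edge-polyline is a simple curve meeting the
vertex points exactly in its two endpoints, and polylines of distinct edges intersect
only in images of common endvertices. -/
def OctiDrawing.IsPlanar {V : Type*} {G : SimpleGraph V} (D : OctiDrawing G) : Prop :=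
  (∀ e ∈ G.edgeSet, (D.poly e).Simple) ∧
  (∀ u v, G.Adj u v →
    (D.poly s(u, v)).image ∩ Set.range (fun w => toR (D.pos w)) =
      {toR (D.pos u), toR (D.pos v)}) ∧
  (∀ e ∈ G.edgeSet, ∀ e' ∈ G.edgeSet, e ≠ e' →
    (D.poly e).image ∩ (D.poly e').image ⊆
      (fun w => toR (D.pos w)) '' {w | w ∈ e ∧ w ∈ e'})

/-- The total number of bends of an octilinear drawing. -/
noncomputable def OctiDrawing.totalBends {V : Type*} [Fintype V] {G : SimpleGraph V}
    (D : OctiDrawing G) : ℕ :=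
  ∑ e ∈ G.edgeSet.toFinite.toFinset, (D.poly e).bends

/-- The union of the images of the polylines of a set `S` of edges. -/
noncomputable def edgesImage {V : Type*} {G : SimpleGraph V} (D : OctiDrawing G)
    (S : Set (Sym2 V)) : Set (ℝ × ℝ) :=
  ⋃ e ∈ S, (D.poly e).image

/-- The interior (in the drawing `D`) of the closed curve formed by the edges in `S`:
the union of the bounded connected components of the complement of the curve. -/
noncomputable def interiorOf {V : Type*} {G : SimpleGraph V} (D : OctiDrawing G)
    (S : Set (Sym2 V)) : Set (ℝ × ℝ) :=
  {z | z ∉ edgesImage D S ∧ Bornology.IsBounded (connectedComponentIn (edgesImage D S)ᶜ z)}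

/-- A graph is triconnected if it has at least `4` vertices and deleting
any at most `2` vertices leaves it connected. -/
def Triconnected {V : Type*} [Fintype V] (G : SimpleGraph V) : Prop :=
  4 ≤ Fintype.card V ∧ ∀ S : Set V, S.ncard ≤ 2 → (G.induce Sᶜ).Connected

/-- The maximum degree of `G` is at most `k`. -/
def MaxDegLE {V : Type*} (G : SimpleGraph V) (k : ℕ) : Prop :=
  ∀ v, (G.neighborSet v).ncard ≤ k

/-!
The graph is the stacked prism `C₃ × P_m`: `m` concentric triangles, the rows, where consecutive
rows are joined by three legs. The cycle `C` is row `0`. It suffices that every row except the last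
has a bent edge.

Suppose that row `i` is drawn without bends, as a triangle `T`. A straight octilinear triangle has
angles `45°`, `45°`, `90°`, and no octilinear direction points into an angle of `45°`. So at two of
its vertices the leg to row `i + 1` leaves `T` to the outside, and by connectedness the whole row
`i + 1` lies outside of `T`.

If `i > 0`, then row `i - 1` lies inside of `T`: two triangles joined to `T` by three legs each
cannot both lie outside, since together with a point in the interior of `T` this would be a planar
drawing essentially of `K₃,₃`. Winding numbers replace the Jordan curve theorem here: row `i - 1`
and the three quadrilaterals between it and `T` have the same winding numbers about a point inside
`T` as about a vertex of row `i + 1`, hence so does `T` itself, although the first of these points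
lies inside `T` and the second one outside.

By connectedness all rows before row `i` lie inside of `T`. Hence, also for `i = 0`, the curve `C`
is contained in `T`, and row `i + 1` lies in an unbounded component of the complement of `C`.
-/

section

open Set Polyline OctiDrawing

/-! ### Polylines -/

namespace Polyline

theorem param_eq_lineMap (P : Polyline) (n : ℕ) {s : ℝ} (hs : s ∈ Icc (n : ℝ) (n + 1)) :
    P.param s = AffineMap.lineMap (P.pt n) (P.pt (n + 1)) (s - n) := by
  rcases eq_or_lt_of_le hs.2 with rfl | hlt
  · simp [param]
  · have hfloor : ⌊s⌋ = (n : ℤ) :=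
      Int.floor_eq_iff.2 ⟨by exact_mod_cast hs.1, by exact_mod_cast hlt⟩
    simp [param, hfloor, AffineMap.lineMap_apply, add_comm]

theorem param_natCast (P : Polyline) (n : ℕ) : P.param n = P.pt n := by
  simp [param]

theorem param_image_Icc (P : Polyline) (n : ℕ) :
    P.param '' Icc (n : ℝ) (n + 1) = segment ℝ (P.pt n) (P.pt (n + 1)) := by
  have hshift : (fun s : ℝ ↦ s - n) '' Icc (n : ℝ) (n + 1) = Icc 0 1 := by simp
  rw [segment_eq_image_lineMap, ← hshift, image_image]
  exact image_congr fun s hs ↦ P.param_eq_lineMap n hs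

theorem continuousOn_param (P : Polyline) (n : ℕ) : ContinuousOn P.param (Icc 0 (n : ℝ)) := by
  induction n with
  | zero => simp
  | succ n ih =>
    rw [Nat.cast_succ, ← Icc_union_Icc_eq_Icc n.cast_nonneg (le_add_of_nonneg_right zero_le_one)]
    refine ih.union_of_isClosed ?_ isClosed_Icc isClosed_Icc
    have hline : Continuous fun s : ℝ ↦ AffineMap.lineMap (P.pt n) (P.pt (n + 1)) (s - n) :=
      AffineMap.lineMap_continuous.comp (by fun_prop)
    exact hline.continuousOn.congr fun s hs ↦ P.param_eq_lineMap n hs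

theorem isPreconnected_image (P : Polyline) : IsPreconnected P.image :=
  isPreconnected_Icc.image _ (P.continuousOn_param P.len)

theorem segment_subset_image (P : Polyline) {n : ℕ} (hn : n < P.len) :
    segment ℝ (P.pt n) (P.pt (n + 1)) ⊆ P.image := by
  rw [← param_image_Icc]
  exact image_mono (Icc_subset_Icc n.cast_nonneg (by exact_mod_cast hn))

theorem pt_mem_image (P : Polyline) {n : ℕ} (hn : n ≤ P.len) : P.pt n ∈ P.image :=
  ⟨n, ⟨n.cast_nonneg, by exact_mod_cast hn⟩, P.param_natCast n⟩

theorem len_eq_one_of_bends_eq_zero {P : Polyline} (h : P.bends = 0) : P.len = 1 :=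
  le_antisymm (Nat.sub_eq_zero_iff_le.1 h) P.len_pos

theorem image_of_len_eq_one {P : Polyline} (h : P.len = 1) :
    P.image = segment ℝ (P.pt 0) (P.pt 1) := by
  simpa [image, h] using P.param_image_Icc 0

theorem OctiSeg.symm {a b : ℝ × ℝ} (h : OctiSeg a b) : OctiSeg b a := by
  unfold OctiSeg at *
  grind

theorem Simple.isPreconnected_image_diff_pt_zero {P : Polyline} (hP : P.Simple) :
    IsPreconnected (P.image \ {P.pt 0}) := by
  have h0 : P.param 0 = P.pt 0 := by simpa using P.param_natCast 0
  rw [← h0, ← image_singleton, image, ← hP.image_sdiff_subset (by simp), Icc_sdiff_left]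
  exact isPreconnected_Ioc.image _ ((P.continuousOn_param P.len).mono Ioc_subset_Icc_self)

theorem Simple.isPreconnected_image_diff_pt_len {P : Polyline} (hP : P.Simple) :
    IsPreconnected (P.image \ {P.pt P.len}) := by
  rw [← P.param_natCast, ← image_singleton, image, ← hP.image_sdiff_subset (by simp),
    Icc_sdiff_right]
  exact isPreconnected_Ico.image _ ((P.continuousOn_param P.len).mono Ico_subset_Icc_self)

theorem Octilinear.exists_segment_pt_zero {P : Polyline} (hP : P.Octilinear) :
    ∃ q ≠ P.pt 0, OctiSeg (P.pt 0) q ∧ segment ℝ (P.pt 0) q ⊆ P.image :=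
  ⟨P.pt 1, (hP.1.1 0 P.len_pos).symm, hP.2 0 P.len_pos, P.segment_subset_image P.len_pos⟩

theorem Octilinear.exists_segment_pt_len {P : Polyline} (hP : P.Octilinear) :
    ∃ q ≠ P.pt P.len, OctiSeg (P.pt P.len) q ∧ segment ℝ (P.pt P.len) q ⊆ P.image := by
  obtain ⟨n, hn⟩ := Nat.exists_eq_add_of_le' P.len_pos
  have hlt : n < P.len := hn ▸ n.lt_succ_self
  rw [hn]
  exact ⟨P.pt n, hP.1.1 n hlt, (hP.2 n hlt).symm, segment_symm ℝ (P.pt n) _ ▸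
    P.segment_subset_image hlt⟩

end Polyline

/-! ### Continuous determinations of angles -/

/-- `E` is a continuous real-valued determination on `U` of the angle-valued function `θ`. -/
structure IsAngleLiftOn {X : Type*} [TopologicalSpace X] (U : Set X) (θ : X → Real.Angle)
    (E : X → ℝ) : Prop where
  continuousOn : ContinuousOn E U
  coe_eq : ∀ z ∈ U, (E z : Real.Angle) = θ z

namespace IsAngleLiftOn

variable {X : Type*} [TopologicalSpace X] {U U' : Set X} {θ θ' : X → Real.Angle} {E E' : X → ℝ}

theorem mono (h : IsAngleLiftOn U θ E) (hU : U' ⊆ U) : IsAngleLiftOn U' θ E :=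
  ⟨h.continuousOn.mono hU, fun z hz ↦ h.coe_eq z (hU hz)⟩

theorem neg (h : IsAngleLiftOn U θ E) : IsAngleLiftOn U (-θ) (-E) :=
  ⟨h.continuousOn.neg, fun z hz ↦ by simp [h.coe_eq z hz]⟩

theorem add (h : IsAngleLiftOn U θ E) (h' : IsAngleLiftOn U θ' E') :
    IsAngleLiftOn U (θ + θ') (E + E') :=
  ⟨h.continuousOn.add h'.continuousOn, fun z hz ↦ by simp [h.coe_eq z hz, h'.coe_eq z hz]⟩

theorem sub (h : IsAngleLiftOn U θ E) (h' : IsAngleLiftOn U θ' E') :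
    IsAngleLiftOn U (θ - θ') (E - E') :=
  ⟨h.continuousOn.sub h'.continuousOn, fun z hz ↦ by simp [h.coe_eq z hz, h'.coe_eq z hz]⟩

theorem sum {ι : Type*} {s : Finset ι} {θ : ι → X → Real.Angle} {E : ι → X → ℝ}
    (h : ∀ i ∈ s, IsAngleLiftOn U (θ i) (E i)) :
    IsAngleLiftOn U (∑ i ∈ s, θ i) (∑ i ∈ s, E i) := by
  classical
  induction s using Finset.induction_on with
  | empty => exact ⟨continuousOn_const, by simp⟩
  | insert i s hi ih =>
    rw [Finset.sum_insert hi, Finset.sum_insert hi]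
    exact (h i (s.mem_insert_self i)).add (ih fun j hj ↦ h j (Finset.mem_insert_of_mem hj))

theorem apply_eq_of_isPreconnected (h : IsAngleLiftOn U 0 E) (hU : IsPreconnected U) {x y : X}
    (hx : x ∈ U) (hy : y ∈ U) : E x = E y := by
  refine (AddCircle.isCoveringMap_coe (2 * Real.pi)).constOn_of_comp hU h.continuousOn ?_ hx hy
  exact fun z hz w hw ↦ (h.coe_eq z hz).trans (h.coe_eq w hw).symm

/-- For two cycles of directions `a`, `b` joined by legs `E`, each of the quadrilaterals
`a j`, `b j`, `b (σ j)`, `a (σ j)` has the same winding number about `x` and about `y`, and so has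
the cycle `b`. The winding numbers of the quadrilaterals add up to the difference of those of the
two cycles. -/
theorem sum_apply_eq {ι : Type*} [Fintype ι] (σ : Equiv.Perm ι) {a b : ι → X → Real.Angle}
    {E F T : ι → X → ℝ} {K : ι → Set X} (hK : ∀ j, IsPreconnected (K j))
    (hE : ∀ j, IsAngleLiftOn (K j) (b j - a j) (E j))
    (hE' : ∀ j, IsAngleLiftOn (K j) (b (σ j) - a (σ j)) (E (σ j)))
    (hF : ∀ j i, IsAngleLiftOn (K j) (b (σ i) - b i) (F i))
    (hT : ∀ j, IsAngleLiftOn (K j) (a (σ j) - a j) (T j)) {x y : X}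
    (hx : ∀ j, x ∈ K j) (hy : ∀ j, y ∈ K j) : ∑ j, T j x = ∑ j, T j y := by
  have hquad (j) : (E j + F j - E (σ j) - T j) x = (E j + F j - E (σ j) - T j) y := by
    have h := (((hE j).add (hF j j)).sub (hE' j)).sub (hT j)
    rw [show b j - a j + (b (σ j) - b j) - (b (σ j) - a (σ j)) - (a (σ j) - a j) = 0 by abel] at h
    exact h.apply_eq_of_isPreconnected (hK j) (hx j) (hy j)
  have hcycle (j : ι) : (∑ i, F i) x = (∑ i, F i) y := by
    have h := IsAngleLiftOn.sum (s := Finset.univ) fun i _ ↦ hF j i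
    rw [Finset.sum_sub_distrib, Equiv.sum_comp σ b, sub_self] at h
    exact h.apply_eq_of_isPreconnected (hK j) (hx j) (hy j)
  have hcycle' : ∑ i, F i x = ∑ i, F i y := by
    cases isEmpty_or_nonempty ι
    · simp
    · simpa using hcycle (Classical.arbitrary ι)
  have hsum := Finset.sum_congr (rfl : Finset.univ = Finset.univ) fun j _ ↦ hquad j
  have hperm (z : X) : ∑ j, E (σ j) z = ∑ j, E j z := Equiv.sum_comp σ fun j ↦ E j z
  simp only [Pi.sub_apply, Pi.add_apply, Finset.sum_sub_distrib, Finset.sum_add_distrib,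
    hperm] at hsum
  linarith

end IsAngleLiftOn

/-! ### Angles swept by polylines -/

/-- The identification of the plane with `ℂ`, used for its argument function. -/
noncomputable abbrev toComplex : (ℝ × ℝ) ≃L[ℝ] ℂ := Complex.equivRealProdCLM.symm

/-- The direction in which `p` is seen from `z`. -/
noncomputable def dirAngle (p z : ℝ × ℝ) : Real.Angle := (Complex.arg (toComplex (p - z)) : ℝ)

/-- The oriented angle in `(-π, π]` under which the segment from `p` to `q` is seen from `z`. The
value is meaningful, and continuous in `z`, off the segment. -/
noncomputable def seenAngle (p q z : ℝ × ℝ) : ℝ :=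
  Complex.arg (toComplex (q - z) / toComplex (p - z))

theorem toComplex_sub_ne_zero {p z : ℝ × ℝ} (h : z ≠ p) : toComplex (p - z) ≠ 0 := by
  simpa [sub_eq_zero] using h.symm

theorem div_mem_slitPlane_of_notMem_segment {p q z : ℝ × ℝ} (h : z ∉ segment ℝ p q) :
    toComplex (q - z) / toComplex (p - z) ∈ Complex.slitPlane := by
  have hp : toComplex (p - z) ≠ 0 :=
    toComplex_sub_ne_zero fun hz ↦ h (hz ▸ left_mem_segment ℝ _ _)
  contrapose! h
  set w := toComplex (q - z) / toComplex (p - z) with hw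
  obtain ⟨hre, him⟩ : w.re ≤ 0 ∧ w.im = 0 := by
    simpa only [Complex.mem_slitPlane_iff_not_le_zero, not_not, Complex.le_def, Complex.zero_re,
      Complex.zero_im] using h
  have hsmul : q - z = (-w.re) • (z - p) := by
    apply toComplex.injective
    rw [map_smul, ← neg_sub p z, map_neg, smul_neg, neg_smul, neg_neg, Complex.real_smul,
      (div_eq_iff hp).1 hw.symm]
    exact congrArg (· * _) (Complex.ext rfl him)
  rw [mem_segment_iff_sameRay, hsmul]
  exact SameRay.sameRay_nonneg_smul_right _ (neg_nonneg.2 hre)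

theorem isAngleLiftOn_seenAngle (p q : ℝ × ℝ) :
    IsAngleLiftOn (segment ℝ p q)ᶜ (dirAngle q - dirAngle p) (seenAngle p q) := by
  have hne {z} (hz : z ∉ segment ℝ p q) : toComplex (p - z) ≠ 0 ∧ toComplex (q - z) ≠ 0 :=
    ⟨toComplex_sub_ne_zero fun h ↦ hz (h ▸ left_mem_segment ℝ _ _),
      toComplex_sub_ne_zero fun h ↦ hz (h ▸ right_mem_segment ℝ _ _)⟩
  refine ⟨fun z hz ↦ ?_, fun z hz ↦ Complex.arg_div_coe_angle (hne hz).2 (hne hz).1⟩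
  have hdiv : ContinuousAt (fun z ↦ toComplex (q - z) / toComplex (p - z)) z :=
    ContinuousAt.div (by fun_prop) (by fun_prop) (hne hz).1
  exact ((Complex.continuousAt_arg (div_mem_slitPlane_of_notMem_segment hz)).comp
    (f := fun z ↦ toComplex (q - z) / toComplex (p - z)) hdiv).continuousWithinAt

theorem Polyline.exists_isAngleLiftOn (P : Polyline) :
    ∃ E, IsAngleLiftOn P.imageᶜ (dirAngle (P.pt P.len) - dirAngle (P.pt 0)) E := by
  refine ⟨∑ i ∈ Finset.range P.len, seenAngle (P.pt i) (P.pt (i + 1)), ?_⟩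
  rw [← Finset.sum_range_sub fun i ↦ dirAngle (P.pt i)]
  exact .sum fun i hi ↦ (isAngleLiftOn_seenAngle _ _).mono
    (compl_subset_compl.2 (P.segment_subset_image (Finset.mem_range.1 hi)))

theorem arg_div_eq_arg_sub_arg {x y : ℂ} (hx : 0 < x.re) (hy : 0 < y.re) :
    Complex.arg (y / x) = Complex.arg y - Complex.arg x := by
  have hx0 : x ≠ 0 := by rintro rfl; simp at hx
  have hy0 : y ≠ 0 := by rintro rfl; simp at hy
  have hxarg := abs_lt.1 (Complex.abs_arg_lt_pi_div_two_iff.2 (.inl hx))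
  have hyarg := abs_lt.1 (Complex.abs_arg_lt_pi_div_two_iff.2 (.inl hy))
  rw [← Complex.arg_coe_angle_toReal_eq_arg, Complex.arg_div_coe_angle hy0 hx0,
    ← Real.Angle.coe_sub, Real.Angle.toReal_coe_eq_self_iff]
  constructor <;> linarith

theorem sum_seenAngle_eq_zero_of_notMem_convexHull {ι : Type*} [Fintype ι] (σ : Equiv.Perm ι)
    {p : ι → ℝ × ℝ} {z : ℝ × ℝ} (hz : z ∉ convexHull ℝ (range p)) :
    ∑ j, seenAngle (p j) (p (σ j)) z = 0 := by
  obtain ⟨f, u, hfz, hf⟩ := geometric_hahn_banach_point_closed (convex_convexHull ℝ (range p))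
    ((finite_range p).isClosed_convexHull ℝ) hz
  let k : ℂ := ⟨f (1, 0), -f (0, 1)⟩
  have hk (v : ℝ × ℝ) : (k * toComplex v).re = f v := by
    have hv : v = v.1 • (1, 0) + v.2 • (0, 1) := by ext <;> simp
    conv_rhs => rw [hv, map_add, map_smul, map_smul]
    simp [k, mul_comm]
  have hpos (j) : 0 < (k * toComplex (p j - z)).re := by
    rw [hk, map_sub, sub_pos]
    exact hfz.trans (hf _ (subset_convexHull ℝ _ (mem_range_self j)))
  have hk0 (j : ι) : k ≠ 0 := by
    intro h
    simpa [h] using hpos j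
  have hseen (j) : seenAngle (p j) (p (σ j)) z =
      Complex.arg (k * toComplex (p (σ j) - z)) - Complex.arg (k * toComplex (p j - z)) := by
    rw [← arg_div_eq_arg_sub_arg (hpos j) (hpos (σ j)), mul_div_mul_left _ _ (hk0 j), seenAngle]
  simp only [hseen, Finset.sum_sub_distrib]
  rw [Equiv.sum_comp σ fun j ↦ Complex.arg (k * toComplex (p j - z)), sub_self]

/-! ### Convex sets and triangles -/

theorem subset_interior_or_subset_compl_of_isPreconnected {X : Type*} [TopologicalSpace X]
    {S K : Set X} (hS : IsPreconnected S) (hK : IsClosed K) (h : Disjoint S (frontier K)) :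
    S ⊆ interior K ∨ S ⊆ Kᶜ := by
  refine hS.subset_or_subset isOpen_interior hK.isOpen_compl
    (disjoint_compl_right.mono_left interior_subset) fun x hx ↦ ?_
  have hxK : x ∉ K \ interior K := hK.frontier_eq ▸ disjoint_left.1 h hx
  grind

theorem add_smul_sub_notMem_of_convex {E : Type*} [AddCommGroup E] [Module ℝ E]
    {K : Set E} (hK : Convex ℝ K) {x z : E} (hx : x ∈ K) (hz : z ∉ K) {t : ℝ} (ht : 0 ≤ t) :
    z + t • (z - x) ∉ K := by
  intro hmem
  have hz' := hK hx hmem (a := t / (1 + t)) (b := 1 / (1 + t)) (by positivity) (by positivity)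
    (by field_simp; ring)
  apply hz
  convert hz' using 1
  match_scalars
  · field_simp
  · field_simp
    ring

theorem not_isBounded_connectedComponentIn_compl {E : Type*} [NormedAddCommGroup E]
    [NormedSpace ℝ E] {K S : Set E} (hK : Convex ℝ K) (hne : K.Nonempty) (hS : S ⊆ K) {z : E}
    (hz : z ∉ K) : ¬ Bornology.IsBounded (connectedComponentIn Sᶜ z) := by
  obtain ⟨x, hx⟩ := hne
  have hzx : z - x ≠ 0 := sub_ne_zero.2 fun h ↦ hz (h ▸ hx)
  let ray : ℝ → E := fun t ↦ z + t • (z - x)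
  have hray : ray '' Ici 0 ⊆ connectedComponentIn Sᶜ z := by
    refine IsPreconnected.subset_connectedComponentIn
      (isPreconnected_Ici.image ray (by fun_prop)) ⟨0, self_mem_Ici, by simp [ray]⟩ ?_
    rintro _ ⟨t, ht, rfl⟩ hmem
    exact add_smul_sub_notMem_of_convex hK hx hz ht (hS hmem)
  intro hb
  obtain ⟨C, hC⟩ := isBounded_iff_forall_norm_le.1 (hb.subset hray)
  have hpos := norm_pos_iff.2 hzx
  have hC0 : 0 ≤ C := (norm_nonneg _).trans (hC _ ⟨0, self_mem_Ici, rfl⟩)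
  set t := (C + ‖z‖ + 1) / ‖z - x‖
  have ht : 0 ≤ t := by positivity
  have hle := hC _ ⟨t, ht, rfl⟩
  have hnorm : ‖t • (z - x)‖ ≤ ‖ray t‖ + ‖z‖ := by
    simpa [ray] using norm_sub_le (ray t) z
  rw [norm_smul, Real.norm_of_nonneg ht, div_mul_cancel₀ _ hpos.ne'] at hnorm
  linarith

theorem segment_subset_insert_interior {E : Type*} [AddCommGroup E] [Module ℝ E]
    [TopologicalSpace E] [IsTopologicalAddGroup E] [ContinuousConstSMul ℝ E] {K : Set E}
    (hK : Convex ℝ K) {x y : E} (hx : x ∈ interior K) (hy : y ∈ K) :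
    segment ℝ x y ⊆ insert y (interior K) := by
  rw [← insert_endpoints_openSegment]
  have hopen := hK.openSegment_interior_self_subset_interior hx hy
  grind

section Triangle

variable (b : AffineBasis (Fin 3) ℝ (ℝ × ℝ))

theorem mem_interior_convexHull_iff_coord_pos {z : ℝ × ℝ} :
    z ∈ interior (convexHull ℝ (range b)) ↔ ∀ j, 0 < b.coord j z := by
  rw [b.interior_convexHull]; rfl

theorem sum_coord_smul_eq (j : Fin 3) (z : ℝ × ℝ) :
    b.coord j z • b j + b.coord (j + 1) z • b (j + 1) + b.coord (j + 2) z • b (j + 2) = z := by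
  have h := b.linear_combination_coord_eq_self z
  rw [← Equiv.sum_comp (Equiv.addLeft j), Fin.sum_univ_three] at h
  simpa using h

theorem sum_coord_eq_one (j : Fin 3) (z : ℝ × ℝ) :
    b.coord j z + b.coord (j + 1) z + b.coord (j + 2) z = 1 := by
  have h := b.sum_coord_apply_eq_one z
  rw [← Equiv.sum_comp (Equiv.addLeft j), Fin.sum_univ_three] at h
  simpa using h

theorem frontier_convexHull_subset :
    frontier (convexHull ℝ (range b)) ⊆ ⋃ j, segment ℝ (b j) (b (j + 1)) := by
  rw [((finite_range b).isClosed_convexHull ℝ).frontier_eq]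
  rintro z ⟨hz, hz'⟩
  rw [mem_interior_convexHull_iff_coord_pos, not_forall] at hz'
  rw [b.convexHull_eq_nonneg_coord] at hz
  obtain ⟨j, hj⟩ := hz'
  have hj0 : b.coord j z = 0 := le_antisymm (not_lt.1 hj) (hz j)
  have hcomb := sum_coord_smul_eq b j z
  have hone := sum_coord_eq_one b j z
  rw [hj0, zero_smul, zero_add] at hcomb
  rw [hj0, zero_add] at hone
  exact mem_iUnion.2 ⟨j + 1, _, _, hz _, hz _, hone, by rwa [add_assoc]⟩

theorem disjoint_segment_interior_convexHull (i j : Fin 3) :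
    Disjoint (segment ℝ (b i) (b j)) (interior (convexHull ℝ (range b))) := by
  obtain ⟨k, hki, hkj⟩ : ∃ k, k ≠ i ∧ k ≠ j := by decide +revert
  rw [disjoint_left]
  rintro _ ⟨r, s, -, -, hrs, rfl⟩ hmem
  have hpos := (mem_interior_convexHull_iff_coord_pos b).1 hmem k
  rw [Convex.combo_affine_apply hrs, b.coord_apply_ne hki, b.coord_apply_ne hkj] at hpos
  simp at hpos

/-- The cross product of plane vectors. -/
def cross (v w : ℝ × ℝ) : ℝ := v.1 * w.2 - v.2 * w.1

theorem im_toComplex_div (v w : ℝ × ℝ) :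
    (toComplex w / toComplex v).im = cross v w / Complex.normSq (toComplex v) := by
  simp [Complex.div_im, cross]
  ring

theorem cross_sub_sub_eq_coord_mul (j : Fin 3) (z : ℝ × ℝ) :
    cross (b (j + 1) - z) (b (j + 2) - z) =
      b.coord j z * cross (b 1 - b 0) (b 2 - b 0) := by
  have hone := sum_coord_eq_one b 0 z
  obtain ⟨hfst, hsnd⟩ := Prod.ext_iff.1 (sum_coord_smul_eq b 0 z)
  simp only [Prod.fst_add, Prod.snd_add, Prod.smul_fst, Prod.smul_snd, smul_eq_mul, zero_add]
    at hone hfst hsnd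
  simp only [cross, Prod.fst_sub, Prod.snd_sub]
  have hmod : (1 : Fin 3) + 2 = 0 ∧ (2 : Fin 3) + 2 = 1 := ⟨rfl, rfl⟩
  fin_cases j <;> simp [hmod] <;> grind

theorem cross_edges_ne_zero : cross (b 1 - b 0) (b 2 - b 0) ≠ 0 := by
  intro h0
  have hcross (z : ℝ × ℝ) : cross (b 1 - z) (b 2 - z) = 0 := by
    simpa [h0] using cross_sub_sub_eq_coord_mul b 0 z
  have hfst := hcross (b 1 - (0, 1))
  have hsnd := hcross (b 1 - (1, 0))
  simp only [cross, sub_sub_cancel, Prod.snd_sub, zero_mul, Prod.fst_sub, sub_zero, one_mul,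
    zero_sub, neg_sub] at hfst hsnd
  have heq : b 1 = b 2 := Prod.ext (by linarith) (by linarith)
  simpa using b.ind.injective heq

theorem arg_mul_pos_of_im_mul_pos {w : ℂ} {d : ℝ} (h : 0 < w.im * d) : 0 < w.arg * d := by
  rcases pos_and_pos_or_neg_and_neg_of_mul_pos h with ⟨him, hd⟩ | ⟨him, hd⟩
  · refine mul_pos ((Complex.arg_nonneg_iff.2 him.le).lt_of_ne' fun h0 ↦ ?_) hd
    exact him.ne' (Complex.arg_eq_zero_iff.1 h0).2
  · exact mul_pos_of_neg_of_neg (Complex.arg_neg_iff.2 him) hd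

theorem sum_seenAngle_ne_zero_of_mem_interior {z : ℝ × ℝ}
    (hz : z ∈ interior (convexHull ℝ (range b))) :
    ∑ j, seenAngle (b j) (b (j + 1)) z ≠ 0 := by
  set d := cross (b 1 - b 0) (b 2 - b 0)
  have hsame_sign (j : Fin 3) : 0 < seenAngle (b (j + 1)) (b (j + 2)) z * d := by
    have hne : z ≠ b (j + 1) := fun h ↦
      disjoint_left.1 (disjoint_segment_interior_convexHull b _ j) (left_mem_segment ℝ _ _) (h ▸ hz)
    have hcoord := (mem_interior_convexHull_iff_coord_pos b).1 hz j
    have hnorm := Complex.normSq_pos.2 (toComplex_sub_ne_zero hne)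
    have hd := mul_self_pos.2 (cross_edges_ne_zero b)
    apply arg_mul_pos_of_im_mul_pos
    rw [im_toComplex_div, cross_sub_sub_eq_coord_mul, div_mul_eq_mul_div, mul_assoc]
    positivity
  rw [← Equiv.sum_comp (Equiv.addRight 1)]
  have hsum := Finset.sum_pos (fun j _ ↦ hsame_sign j) Finset.univ_nonempty
  rw [← Finset.sum_mul] at hsum
  simpa [add_assoc] using left_ne_zero_of_mul hsum.ne'

end Triangle

/-! ### Octilinear directions -/

theorem im_pow_four (z : ℂ) :
    (z ^ 4).im = 4 * z.re * z.im * ((z.re - z.im) * (z.re + z.im)) := by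
  simp [pow_succ]
  ring

/-- The octilinear directions are the eighth roots of unity up to real factors. -/
theorem octiSeg_iff_im_pow_four {p q : ℝ × ℝ} :
    OctiSeg p q ↔ (toComplex (q - p) ^ 4).im = 0 := by
  have hre : (toComplex (q - p)).re = q.1 - p.1 := by simp
  have him : (toComplex (q - p)).im = q.2 - p.2 := by simp
  rw [im_pow_four, hre, him, OctiSeg]
  grind

theorem im_mul_pow_four_eq_zero_iff {u : ℂ} (hu0 : u ≠ 0) (hu : (u ^ 4).im = 0) (w : ℂ) :
    ((u * w) ^ 4).im = 0 ↔ (w ^ 4).im = 0 := by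
  have hre : (u ^ 4).re ≠ 0 := fun h ↦ pow_ne_zero 4 hu0 (Complex.ext h hu)
  simp [mul_pow, hu, hre]

/-- If `0`, `1`, `w` form an octilinear triangle whose angle at `0` is not right, then this angle is
`45°`, and the interior of the angle contains no octilinear direction. -/
theorem im_one_add_mul_pow_four_ne_zero {w : ℂ} (him : w.im ≠ 0) (hre : w.re ≠ 0)
    (hw : (w ^ 4).im = 0) (hw1 : ((w - 1) ^ 4).im = 0) {t : ℝ} (ht : 0 < t) :
    ((1 + t * w) ^ 4).im ≠ 0 := by
  rw [im_pow_four] at hw hw1 ⊢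
  simp only [Complex.sub_re, Complex.sub_im, Complex.one_re, Complex.one_im, Complex.add_re,
    Complex.add_im, Complex.re_ofReal_mul, Complex.im_ofReal_mul, sub_zero, zero_add] at hw1 ⊢
  have hsq : w.im ^ 2 = w.re ^ 2 := by grind
  have hre_cases : w.re = 1 ∨ w.re = 1 / 2 := by grind
  have hpos : 0 < w.re := by rcases hre_cases with h | h <;> rw [h] <;> norm_num
  have hfactor : (1 + t * w.re - t * w.im) * (1 + t * w.re + t * w.im) = 1 + 2 * (t * w.re) := by
    linear_combination -t ^ 2 * hsq
  rw [hfactor]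
  positivity

section Triangle

variable (b : AffineBasis (Fin 3) ℝ (ℝ × ℝ))

theorem exists_re_div_ne_zero :
    ∃ j, (toComplex (b (j + 2) - b j) / toComplex (b (j + 1) - b j)).re ≠ 0 := by
  by_contra! h
  set w := toComplex (b 2 - b 0) / toComplex (b 1 - b 0) with hw
  have hne : toComplex (b 1 - b 0) ≠ 0 :=
    toComplex_sub_ne_zero fun h ↦ by simpa using b.ind.injective h
  have hre : w.re = 0 := h 0
  have hone_sub : toComplex (b 0 - b 1) / toComplex (b 2 - b 1) = (1 - w)⁻¹ := by
    rw [← sub_sub_sub_cancel_right (b 2) (b 1) (b 0), ← neg_sub (b 1) (b 0), map_sub, map_neg, hw,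
      one_sub_div hne, inv_div, ← neg_sub (toComplex (b 1 - b 0)), neg_div_neg_eq]
  have hre' : ((1 - w)⁻¹).re = 0 := hone_sub ▸ h 1
  have hne' : 1 - w ≠ 0 := fun h0 ↦ by simpa [hre] using congrArg Complex.re h0
  simp [Complex.inv_re, hre, hne'] at hre'

theorem sub_vertex_eq_smul_add_smul (j : Fin 3) (q : ℝ × ℝ) :
    q - b j = b.coord (j + 1) q • (b (j + 1) - b j) + b.coord (j + 2) q • (b (j + 2) - b j) := by
  conv_lhs => rw [← sum_coord_smul_eq b j q]
  rw [eq_sub_of_add_eq (eq_sub_of_add_eq (sum_coord_eq_one b j q))]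
  module

theorem im_div_ne_zero (j : Fin 3) :
    (toComplex (b (j + 2) - b j) / toComplex (b (j + 1) - b j)).im ≠ 0 := by
  have hne : toComplex (b (j + 1) - b j) ≠ 0 :=
    toComplex_sub_ne_zero fun h ↦ by simpa using b.ind.injective h
  rw [im_toComplex_div, cross_sub_sub_eq_coord_mul, b.coord_apply_eq, one_mul]
  exact div_ne_zero (cross_edges_ne_zero b) (Complex.normSq_pos.2 hne).ne'

theorem notMem_interior_of_octiSeg (hb : ∀ i j, OctiSeg (b i) (b j)) {j : Fin 3}
    (hj : (toComplex (b (j + 2) - b j) / toComplex (b (j + 1) - b j)).re ≠ 0) {q : ℝ × ℝ}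
    (hq : OctiSeg (b j) q) : q ∉ interior (convexHull ℝ (range b)) := by
  intro hmem
  have hpos := (mem_interior_convexHull_iff_coord_pos b).1 hmem
  set u := toComplex (b (j + 1) - b j) with hu
  set v := toComplex (b (j + 2) - b j) with hv
  have hne : u ≠ 0 := toComplex_sub_ne_zero fun h ↦ by simpa using b.ind.injective h
  have hpow (i k : Fin 3) : (toComplex (b k - b i) ^ 4).im = 0 := octiSeg_iff_im_pow_four.1 (hb i k)
  have hdiv (x : ℂ) (hx : (x ^ 4).im = 0) : ((x / u) ^ 4).im = 0 :=
    (im_mul_pow_four_eq_zero_iff hne (hpow _ _) _).1 (by rwa [mul_div_cancel₀ _ hne])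
  have hsub : v / u - 1 = toComplex (b (j + 2) - b (j + 1)) / u := by
    rw [div_sub_one hne, hu, hv, ← map_sub, sub_sub_sub_cancel_right]
  set r := b.coord (j + 1) q
  set s := b.coord (j + 2) q
  have hr : (r : ℂ) ≠ 0 := Complex.ofReal_ne_zero.2 (hpos (j + 1)).ne'
  have hqj : toComplex (q - b j) = r * (u * (1 + (s / r : ℝ) * (v / u))) := by
    rw [sub_vertex_eq_smul_add_smul, map_add, map_smul, map_smul, Complex.real_smul,
      Complex.real_smul, Complex.ofReal_div]
    change r * u + s * v = _
    field_simp
  refine im_one_add_mul_pow_four_ne_zero (im_div_ne_zero b j) hj (hdiv v (hpow _ _))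
    (hsub ▸ hdiv _ (hpow _ _)) (div_pos (hpos (j + 2)) (hpos (j + 1))) ?_
  rw [← im_mul_pow_four_eq_zero_iff hne (hpow _ _), ← im_mul_pow_four_eq_zero_iff hr
    (by norm_cast), ← hqj]
  exact octiSeg_iff_im_pow_four.1 hq

end Triangle

/-! ### Stacked prisms -/

/-- The stack of triangular prisms with `m` rows, each of them a triangle, consecutive rows being
joined by three legs: the vertex `(i, j)` lies in row `i` and column `j`. -/
abbrev prismStack (m : ℕ) : SimpleGraph (Fin m × Fin 3) :=
  SimpleGraph.pathGraph m □ (⊤ : SimpleGraph (Fin 3))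

namespace MaxDegLE

theorem boxProd {α β : Type*} {G : SimpleGraph α} {H : SimpleGraph β} {k l : ℕ}
    (hG : MaxDegLE G k) (hH : MaxDegLE H l) : MaxDegLE (G □ H) (k + l) := by
  rintro ⟨a, b⟩
  rw [SimpleGraph.neighborSet_boxProd]
  refine (ncard_union_le _ _).trans (add_le_add ?_ ?_)
  · simpa [ncard_prod] using hG a
  · simpa [ncard_prod] using hH b

theorem pathGraph (m : ℕ) : MaxDegLE (SimpleGraph.pathGraph m) 2 := by
  intro v
  rw [← ncard_image_of_injective _ Fin.val_injective]
  have hpair : ({v.val + 1, v.val - 1} : Set ℕ).ncard ≤ 2 :=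
    (ncard_insert_le _ _).trans_eq (by rw [ncard_singleton])
  refine (ncard_le_ncard ?_ (toFinite _)).trans hpair
  rintro _ ⟨w, hw, rfl⟩
  rw [SimpleGraph.mem_neighborSet, SimpleGraph.pathGraph_adj] at hw
  grind

theorem top (V : Type*) [Fintype V] : MaxDegLE (⊤ : SimpleGraph V) (Fintype.card V - 1) := by
  intro v
  rw [SimpleGraph.neighborSet_top, ncard_compl, ncard_singleton, Nat.card_eq_fintype_card]

theorem of_iso {V W : Type*} {G : SimpleGraph V} {H : SimpleGraph W} (e : G ≃g H) {k : ℕ}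
    (hG : MaxDegLE G k) : MaxDegLE H k := by
  intro w
  simpa [← Nat.card_coe_set_eq, Nat.card_congr (e.symm.mapNeighborSet w)] using hG (e.symm w)

end MaxDegLE

theorem connected_induce_compl_boxProd_top {α β : Type*} {G : SimpleGraph α} (hG : G.Connected)
    {S : Set (α × β)} (hS : S.encard < ENat.card β) :
    ((G □ (⊤ : SimpleGraph β)).induce Sᶜ).Connected := by
  obtain ⟨c, hc⟩ : ∃ c, ∀ a, (a, c) ∉ S := by
    have hne : Prod.snd '' S ≠ univ := fun h ↦
      hS.not_ge (encard_univ β ▸ h ▸ encard_image_le Prod.snd S)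
    obtain ⟨c, hc⟩ := (ne_univ_iff_exists_notMem _).1 hne
    exact ⟨c, fun a ha ↦ hc ⟨_, ha, rfl⟩⟩
  let column : G →g (G □ (⊤ : SimpleGraph β)).induce Sᶜ :=
    ⟨fun a ↦ ⟨(a, c), hc a⟩, fun hab ↦ by simpa using hab⟩
  have hrow (x : (Sᶜ : Set (α × β))) :
      ((G □ (⊤ : SimpleGraph β)).induce Sᶜ).Reachable x (column x.1.1) := by
    by_cases hx : x.1.2 = c
    · have heq : x = column x.1.1 := Subtype.ext (Prod.ext rfl hx)
      exact heq ▸ .rfl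
    · exact SimpleGraph.Adj.reachable (by simpa [column, SimpleGraph.boxProd_adj] using hx)
  have := hG.nonempty.map column
  exact ⟨fun x y ↦ (hrow x).trans (((hG.preconnected _ _).map column).trans (hrow y).symm)⟩

namespace Triconnected

theorem of_iso {V W : Type*} [Fintype V] [Fintype W] {G : SimpleGraph V} {H : SimpleGraph W}
    (e : G ≃g H) (hG : Triconnected G) : Triconnected H := by
  refine ⟨hG.1.trans_eq (Fintype.card_congr e.toEquiv), fun S hS ↦ ?_⟩
  have hcard : (e ⁻¹' S).ncard ≤ 2 := by
    rwa [ncard_preimage_of_injective_subset_range e.injective (by simp [e.surjective.range_eq])]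
  have hmaps : MapsTo e.toHom (e ⁻¹' S)ᶜ Sᶜ := fun v hv ↦ hv
  refine (hG.2 _ hcard).map (SimpleGraph.induceHom e.toHom hmaps) ?_
  rintro ⟨w, hw⟩
  have hw' : e.symm w ∈ (e ⁻¹' S)ᶜ := by simpa using hw
  exact ⟨⟨e.symm w, hw'⟩, Subtype.ext (e.apply_symm_apply w)⟩

theorem prismStack {m : ℕ} (hm : 2 ≤ m) : Triconnected (prismStack m) := by
  obtain ⟨n, rfl⟩ := Nat.exists_eq_add_of_le' (one_le_two.trans hm)
  refine ⟨by simp only [Fintype.card_prod, Fintype.card_fin]; lia, fun S hS ↦ ?_⟩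
  apply connected_induce_compl_boxProd_top (SimpleGraph.pathGraph_connected n)
  rw [← S.toFinite.cast_ncard_eq]
  simpa using Nat.cast_lt (α := ℕ∞) |>.2 (Nat.lt_succ_of_le hS)

end Triconnected

/-! ### Straight-line drawings -/

namespace Polyline

/-- The polyline consisting of a single segment. -/
def ofSegment (p q : ℝ × ℝ) : Polyline where
  len := 1
  len_pos := le_rfl
  pt n := if n = 0 then p else q

theorem image_ofSegment (p q : ℝ × ℝ) : (ofSegment p q).image = segment ℝ p q :=
  image_of_len_eq_one rfl

theorem proper_ofSegment {p q : ℝ × ℝ} (h : p ≠ q) : (ofSegment p q).Proper :=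
  ⟨by simpa [ofSegment] using h, by simp [ofSegment]⟩

theorem simple_ofSegment {p q : ℝ × ℝ} (h : p ≠ q) : (ofSegment p q).Simple := by
  have hparam {s : ℝ} (hs : s ∈ Icc 0 ((ofSegment p q).len : ℝ)) :
      (ofSegment p q).param s = AffineMap.lineMap p q s := by
    simpa [ofSegment] using (ofSegment p q).param_eq_lineMap 0 (by simpa [ofSegment] using hs)
  intro s hs t ht hst
  rw [hparam hs, hparam ht] at hst
  exact AffineMap.lineMap_injective ℝ h hst

end Polyline

namespace GraphPlanar

theorem of_segments {V : Type*} {G : SimpleGraph V} {pos : V → ℝ × ℝ}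
    (hinj : Function.Injective pos)
    (hvertex : ∀ u v w, G.Adj u v → pos w ∈ segment ℝ (pos u) (pos v) → w ∈ s(u, v))
    (hedge : ∀ u v u' v', G.Adj u v → G.Adj u' v' → s(u, v) ≠ s(u', v') →
      segment ℝ (pos u) (pos v) ∩ segment ℝ (pos u') (pos v') ⊆ range pos) :
    GraphPlanar G := by
  let poly (e : Sym2 V) : Polyline := ofSegment (pos (Quot.out e).1) (pos (Quot.out e).2)
  have hout (e : Sym2 V) : s((Quot.out e).1, (Quot.out e).2) = e := Quot.out_eq e
  have hadj {e : Sym2 V} (he : e ∈ G.edgeSet) : G.Adj (Quot.out e).1 (Quot.out e).2 := by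
    rwa [← SimpleGraph.mem_edgeSet, hout]
  have himage (u v : V) : (poly s(u, v)).image = segment ℝ (pos u) (pos v) := by
    rw [image_ofSegment]
    rcases Sym2.eq_iff.1 (hout s(u, v)) with ⟨h₁, h₂⟩ | ⟨h₁, h₂⟩
    · rw [h₁, h₂]
    · rw [h₁, h₂, segment_symm]
  refine ⟨⟨pos, hinj, poly, fun u v _ ↦ ?_, fun e he ↦ proper_ofSegment (hinj.ne (hadj he).ne)⟩,
    fun e he ↦ simple_ofSegment (hinj.ne (hadj he).ne), fun u v huv ↦ ?_, ?_⟩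
  · rcases Sym2.eq_iff.1 (hout s(u, v)) with ⟨h₁, h₂⟩ | ⟨h₁, h₂⟩
    · simp [poly, ofSegment, h₁, h₂]
    · simp [poly, ofSegment, h₁, h₂, pair_comm]
  · rw [himage]
    refine Subset.antisymm ?_ (insert_subset ⟨left_mem_segment ℝ _ _, mem_range_self u⟩
      (singleton_subset_iff.2 ⟨right_mem_segment ℝ _ _, mem_range_self v⟩))
    rintro _ ⟨hx, w, rfl⟩
    rcases Sym2.mem_iff.1 (hvertex u v w huv hx) with rfl | rfl <;> simp
  · refine Sym2.ind fun u v huv ↦ Sym2.ind fun u' v' huv' hne x hx ↦ ?_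
    rw [himage, himage] at hx
    obtain ⟨w, rfl⟩ := hedge u v u' v' huv huv' hne hx
    exact ⟨w, ⟨hvertex u v w huv hx.1, hvertex u' v' w huv' hx.2⟩, rfl⟩

theorem of_copy {V W : Type*} {G : SimpleGraph V} {H : SimpleGraph W} (f : G.Copy H)
    (hH : GraphPlanar H) : GraphPlanar G := by
  obtain ⟨D, hsimple, hends, hinter⟩ := hH
  have hmem {e : Sym2 V} (he : e ∈ G.edgeSet) : e.map f ∈ H.edgeSet := f.toHom.map_mem_edgeSet he
  refine ⟨⟨D.pos ∘ f, D.inj.comp f.injective, fun e ↦ D.poly (e.map f),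
    fun u v huv ↦ D.ends _ _ (f.toHom.map_adj huv), fun e he ↦ D.proper _ (hmem he)⟩,
    fun e he ↦ hsimple _ (hmem he), fun u v huv ↦ ?_, fun e he e' he' hne ↦ ?_⟩
  · refine Subset.antisymm ?_ ?_
    · exact (inter_subset_inter_right _ (range_comp_subset_range f D.pos)).trans
        (hends _ _ (f.toHom.map_adj huv)).subset
    · refine subset_inter ?_ (pair_subset (mem_range_self u) (mem_range_self v))
      exact (hends _ _ (f.toHom.map_adj huv)).superset.trans inter_subset_left
  · refine (hinter _ (hmem he) _ (hmem he') fun h ↦ hne (Sym2.map.injective f.injective h)).trans ?_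
    rintro _ ⟨_, ⟨hw, hw'⟩, rfl⟩
    obtain ⟨w, hwe, rfl⟩ := Sym2.mem_map.1 hw
    obtain ⟨w', hwe', heq⟩ := Sym2.mem_map.1 hw'
    exact ⟨w, ⟨hwe, f.injective heq ▸ hwe'⟩, rfl⟩

end GraphPlanar

/-! ### A planar drawing of the stack of prisms -/

/-- The directions of the three rays from the origin carrying the columns of the drawing. -/
def fanDir : Fin 3 → ℝ × ℝ := ![(1, 0), (0, 1), (-1, -1)]

/-- The nonnegative coordinates of a point with respect to `fanDir`, one of which vanishes: those
with respect to the two rays bounding a sector that contains the point, and `0`. -/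
noncomputable def fanCoord (x : ℝ × ℝ) : Fin 3 → ℝ :=
  fun k ↦ ![x.1, x.2, 0] k - min (min x.1 x.2) 0

theorem sum_fanCoord_smul_fanDir (x : ℝ × ℝ) : ∑ k, fanCoord x k • fanDir k = x := by
  ext <;> simp [Fin.sum_univ_three, fanCoord, fanDir]

theorem fanCoord_sum_smul_fanDir {c : Fin 3 → ℝ} (hc : 0 ≤ c) {i : Fin 3} (hi : c i = 0) :
    fanCoord (∑ k, c k • fanDir k) = c := by
  have hx : ∑ k, c k • fanDir k = (c 0 - c 2, c 1 - c 2) := by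
    ext <;> simp [Fin.sum_univ_three, fanDir, sub_eq_add_neg]
  have hmin : min (min (c 0 - c 2) (c 1 - c 2)) 0 = -c 2 := by
    have h0 : 0 ≤ c 0 := hc 0
    have h1 : 0 ≤ c 1 := hc 1
    have h2 : 0 ≤ c 2 := hc 2
    fin_cases i <;> grind
  rw [hx]
  ext k
  fin_cases k <;> simp [fanCoord, hmin]

namespace prismStack

variable {m : ℕ}

/-- The vertex in row `i` of the column `j` is drawn on the ray `j`, at distance `i + 1`. -/
noncomputable def planarPos (v : Fin m × Fin 3) : ℝ × ℝ := (v.1 + 1 : ℝ) • fanDir v.2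

theorem exists_fanCoord_eq {u v : Fin m × Fin 3} {x : ℝ × ℝ}
    (hx : x ∈ segment ℝ (planarPos u) (planarPos v)) :
    ∃ a b : ℝ, 0 ≤ a ∧ 0 ≤ b ∧ a + b = 1 ∧
      fanCoord x = Pi.single u.2 (a * (u.1 + 1)) + Pi.single v.2 (b * (v.1 + 1)) := by
  obtain ⟨a, b, ha, hb, hab, rfl⟩ := hx
  refine ⟨a, b, ha, hb, hab, ?_⟩
  have hne : ∀ j k : Fin 3, ∃ i, i ≠ j ∧ i ≠ k := by decide
  obtain ⟨i, hiu, hiv⟩ := hne u.2 v.2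
  have hc : 0 ≤ (Pi.single u.2 (a * (u.1 + 1)) + Pi.single v.2 (b * (v.1 + 1)) : Fin 3 → ℝ) :=
    add_nonneg (Pi.single_nonneg.2 (by positivity)) (Pi.single_nonneg.2 (by positivity))
  rw [← fanCoord_sum_smul_fanDir hc (i := i) (by simp [hiu, hiv])]
  simp [planarPos, add_smul, Finset.sum_add_distrib, Pi.single_apply, ite_smul, mul_smul]

theorem fanCoord_eq_zero {u v : Fin m × Fin 3} {x : ℝ × ℝ}
    (hx : x ∈ segment ℝ (planarPos u) (planarPos v)) {k : Fin 3} (hu : k ≠ u.2) (hv : k ≠ v.2) :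
    fanCoord x k = 0 := by
  obtain ⟨a, b, -, -, -, h⟩ := exists_fanCoord_eq hx
  simp [h, hu, hv]

theorem sum_fanCoord_mem_segment {u v : Fin m × Fin 3} {x : ℝ × ℝ}
    (hx : x ∈ segment ℝ (planarPos u) (planarPos v)) :
    ∑ k, fanCoord x k ∈ segment ℝ (u.1 + 1 : ℝ) (v.1 + 1) := by
  obtain ⟨a, b, ha, hb, hab, h⟩ := exists_fanCoord_eq hx
  exact ⟨a, b, ha, hb, hab, by simp [h, Finset.sum_add_distrib]⟩

theorem fanCoord_planarPos (v : Fin m × Fin 3) :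
    fanCoord (planarPos v) = Pi.single v.2 (v.1 + 1 : ℝ) := by
  obtain ⟨a, b, -, -, hab, h⟩ :=
    exists_fanCoord_eq (segment_same ℝ (planarPos v) ▸ mem_singleton (planarPos v))
  rw [h, ← Pi.single_add, ← add_mul, hab, one_mul]

theorem sum_fanCoord_planarPos (v : Fin m × Fin 3) : ∑ k, fanCoord (planarPos v) k = v.1 + 1 := by
  simp [fanCoord_planarPos]

theorem planarPos_injective : Function.Injective (planarPos (m := m)) := by
  intro v w h
  have hrow : v.1 = w.1 := by
    simpa [Fin.ext_iff, sum_fanCoord_planarPos] using congrArg (fun x ↦ ∑ k, fanCoord x k) h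
  have hcol : v.2 = w.2 := by
    by_contra hne
    have h0 := congrFun (congrArg fanCoord h) v.2
    rw [fanCoord_planarPos, fanCoord_planarPos, Pi.single_eq_same, Pi.single_eq_of_ne hne] at h0
    exact (Nat.cast_add_one_pos (α := ℝ) v.1.val).ne' h0
  exact Prod.ext hrow hcol

theorem mem_range_planarPos {x : ℝ × ℝ} {i : Fin m} {l : Fin 3}
    (hlevel : ∑ k, fanCoord x k = i + 1) (hx : ∀ k ≠ l, fanCoord x k = 0) :
    x ∈ range (planarPos (m := m)) := by
  have hl : fanCoord x l = i + 1 := by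
    rw [← hlevel, Finset.sum_eq_single l (fun k _ ↦ hx k) (by simp)]
  refine ⟨(i, l), ?_⟩
  rw [← sum_fanCoord_smul_fanDir x,
    Finset.sum_eq_single l (fun k _ hk ↦ by simp [hx k hk]) (by simp), hl, planarPos]

theorem sum_fanCoord_of_row_eq {u v : Fin m × Fin 3} (hrow : u.1 = v.1) {x : ℝ × ℝ}
    (hx : x ∈ segment ℝ (planarPos u) (planarPos v)) : ∑ k, fanCoord x k = u.1 + 1 := by
  simpa [hrow, segment_same] using sum_fanCoord_mem_segment hx

theorem mem_of_planarPos_mem_segment {u v w : Fin m × Fin 3} (huv : (prismStack m).Adj u v)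
    (hw : planarPos w ∈ segment ℝ (planarPos u) (planarPos v)) : w ∈ s(u, v) := by
  have hrow : w.1 = u.1 ∨ w.1 = v.1 := by
    have hlevel := segment_subset_uIcc _ _ (sum_fanCoord_mem_segment hw)
    rw [sum_fanCoord_planarPos, mem_uIcc] at hlevel
    norm_cast at hlevel
    rw [SimpleGraph.boxProd_adj, SimpleGraph.pathGraph_adj] at huv
    grind
  have hcol : w.2 = u.2 ∨ w.2 = v.2 := by
    by_contra! hne
    have h0 := fanCoord_eq_zero hw hne.1 hne.2
    rw [fanCoord_planarPos, Pi.single_eq_same] at h0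
    exact (Nat.cast_add_one_pos (α := ℝ) w.1.val).ne' h0
  rw [Sym2.mem_iff]
  rw [SimpleGraph.boxProd_adj] at huv
  grind

theorem exists_eq_add_one_of_pathGraph_adj {u v u' v' : Fin m}
    (huv : (SimpleGraph.pathGraph m).Adj u v) (huv' : (SimpleGraph.pathGraph m).Adj u' v')
    (hne : s(u, v) ≠ s(u', v')) {t : ℝ} (ht : t ∈ segment ℝ (u + 1 : ℝ) (v + 1))
    (ht' : t ∈ segment ℝ (u' + 1 : ℝ) (v' + 1)) : ∃ i : Fin m, t = i + 1 := by
  wlog hlt : u < v generalizing u v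
  · rw [segment_symm] at ht
    exact this huv.symm (by rwa [Sym2.eq_swap]) ht (huv.ne.lt_or_gt.resolve_left hlt)
  wlog hlt' : u' < v' generalizing u' v'
  · rw [segment_symm] at ht'
    exact this huv'.symm ht' (by rwa [Sym2.eq_swap (a := v')]) (huv'.ne.lt_or_gt.resolve_left hlt')
  wlog hle : u ≤ u' generalizing u v u' v'
  · exact this huv' ht' hlt' huv ht hne.symm hlt (le_of_not_ge hle)
  have hvu : v ≤ u' := by
    rw [SimpleGraph.pathGraph_adj] at huv huv'
    rw [Ne, Sym2.eq_iff] at hne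
    lia
  have hcast : (u : ℝ) ≤ v ∧ (v : ℝ) ≤ u' ∧ (u' : ℝ) ≤ v' :=
    ⟨mod_cast hlt.le, mod_cast hvu, mod_cast hlt'.le⟩
  rw [segment_eq_Icc (by linarith)] at ht ht'
  exact ⟨v, le_antisymm ht.2 (by linarith [ht'.1])⟩

theorem segment_inter_segment_subset {u v u' v' : Fin m × Fin 3} (huv : (prismStack m).Adj u v)
    (huv' : (prismStack m).Adj u' v') (hne : s(u, v) ≠ s(u', v')) :
    segment ℝ (planarPos u) (planarPos v) ∩ segment ℝ (planarPos u') (planarPos v') ⊆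
      range (planarPos (m := m)) := by
  rintro x ⟨hx, hx'⟩
  have hzero {k} (hu : k ≠ u.2) (hv : k ≠ v.2) := fanCoord_eq_zero hx hu hv
  have hzero' {k} (hu : k ≠ u'.2) (hv : k ≠ v'.2) := fanCoord_eq_zero hx' hu hv
  rcases SimpleGraph.boxProd_adj.1 huv with ⟨hadj, hcol⟩ | ⟨hadj, hrow⟩ <;>
    rcases SimpleGraph.boxProd_adj.1 huv' with ⟨hadj', hcol'⟩ | ⟨hadj', hrow'⟩
  · have hlevel := sum_fanCoord_mem_segment hx
    have hcols : u.2 = u'.2 := by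
      by_contra hne
      have hvanish (k) : fanCoord x k = 0 := by
        by_cases hk : k = u.2
        · exact hzero' (hk ▸ hne) (hk ▸ hcol' ▸ hne)
        · exact hzero hk (hcol ▸ hk)
      have hpos := (convex_Ioi (0 : ℝ)).segment_subset
        (mem_Ioi.2 (Nat.cast_add_one_pos u.1.val)) (mem_Ioi.2 (Nat.cast_add_one_pos v.1.val)) hlevel
      simp [hvanish] at hpos
    have hlegs : s(u.1, v.1) ≠ s(u'.1, v'.1) := by
      grind
    obtain ⟨i, hi⟩ := exists_eq_add_one_of_pathGraph_adj hadj hadj' hlegs hlevel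
      (sum_fanCoord_mem_segment hx')
    exact mem_range_planarPos hi fun k hk ↦ hzero hk (hcol ▸ hk)
  · exact mem_range_planarPos (sum_fanCoord_of_row_eq hrow' hx') fun k hk ↦ hzero hk (hcol ▸ hk)
  · exact mem_range_planarPos (sum_fanCoord_of_row_eq hrow hx) fun k hk ↦ hzero' hk (hcol' ▸ hk)
  · have hlevel := sum_fanCoord_of_row_eq hrow hx
    have hrows : u.1 = u'.1 := by
      simpa [Fin.ext_iff, hlevel] using sum_fanCoord_of_row_eq hrow' hx'
    have hcommon : ∃ l, ∀ k ≠ l, k ≠ u.2 ∧ k ≠ v.2 ∨ k ≠ u'.2 ∧ k ≠ v'.2 := by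
      have hdec : ∀ j k j' k' : Fin 3, j ≠ k → j' ≠ k' → s(j, k) ≠ s(j', k') →
          ∃ l, ∀ i ≠ l, i ≠ j ∧ i ≠ k ∨ i ≠ j' ∧ i ≠ k' := by decide
      exact hdec _ _ _ _ hadj hadj' (by grind)
    obtain ⟨l, hl⟩ := hcommon
    exact mem_range_planarPos hlevel fun k hk ↦
      (hl k hk).elim (fun h ↦ hzero h.1 h.2) fun h ↦ hzero' h.1 h.2

end prismStack

theorem GraphPlanar.prismStack (m : ℕ) : GraphPlanar (prismStack m) :=
  .of_segments prismStack.planarPos_injective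
    (fun _ _ _ ↦ prismStack.mem_of_planarPos_mem_segment)
    fun _ _ _ _ ↦ prismStack.segment_inter_segment_subset

/-! ### Octilinear drawings -/

namespace OctiDrawing

variable {V : Type*} {G : SimpleGraph V} (D : OctiDrawing G) {u v u' v' w : V}

/-- The point of the real plane representing the vertex `w`. -/
def point (w : V) : ℝ × ℝ := toR (D.pos w)

/-- The curve drawn for the edge joining `u` and `v`. -/
noncomputable def curve (u v : V) : Set (ℝ × ℝ) := (D.poly s(u, v)).image

theorem curve_comm (u v : V) : D.curve u v = D.curve v u := by
  rw [curve, curve, Sym2.eq_swap]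

theorem isPreconnected_curve (u v : V) : IsPreconnected (D.curve u v) :=
  Polyline.isPreconnected_image _

theorem point_injective : Function.Injective D.point := by
  intro u v h
  simpa [point, toR, ← Prod.ext_iff, D.inj.eq_iff] using h

theorem pt_zero_and_pt_len (h : G.Adj u v) :
    ((D.poly s(u, v)).pt 0 = D.point u ∧ (D.poly s(u, v)).pt (D.poly s(u, v)).len = D.point v) ∨
    ((D.poly s(u, v)).pt 0 = D.point v ∧ (D.poly s(u, v)).pt (D.poly s(u, v)).len = D.point u) :=
  pair_eq_pair_iff.1 (D.ends u v h)

theorem left_mem_curve (h : G.Adj u v) : D.point u ∈ D.curve u v := by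
  rcases D.pt_zero_and_pt_len h with ⟨h₀, -⟩ | ⟨-, h₁⟩
  · exact h₀ ▸ pt_mem_image _ (Nat.zero_le _)
  · exact h₁ ▸ pt_mem_image _ le_rfl

theorem right_mem_curve (h : G.Adj u v) : D.point v ∈ D.curve u v :=
  D.curve_comm v u ▸ D.left_mem_curve h.symm

theorem exists_isAngleLiftOn_compl_curve (h : G.Adj u v) :
    ∃ E, IsAngleLiftOn (D.curve u v)ᶜ (dirAngle (D.point v) - dirAngle (D.point u)) E := by
  obtain ⟨E, hE⟩ := (D.poly s(u, v)).exists_isAngleLiftOn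
  rcases D.pt_zero_and_pt_len h with ⟨h₀, h₁⟩ | ⟨h₀, h₁⟩ <;> rw [h₀, h₁] at hE
  · exact ⟨E, hE⟩
  · exact ⟨-E, neg_sub (dirAngle (D.point u)) _ ▸ hE.neg⟩

theorem curve_eq_segment (h : G.Adj u v) (hb : (D.poly s(u, v)).bends = 0) :
    D.curve u v = segment ℝ (D.point u) (D.point v) := by
  have hlen := len_eq_one_of_bends_eq_zero hb
  rw [curve, image_of_len_eq_one hlen]
  rcases D.pt_zero_and_pt_len h with ⟨h₀, h₁⟩ | ⟨h₀, h₁⟩ <;> rw [hlen] at h₁ <;> rw [h₀, h₁]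
  exact segment_symm ℝ _ _

theorem octiSeg_of_bends_eq_zero (h : G.Adj u v) (hb : (D.poly s(u, v)).bends = 0) :
    OctiSeg (D.point u) (D.point v) := by
  have hlen := len_eq_one_of_bends_eq_zero hb
  have hocti := (D.octi _ h).2 0 (D.poly s(u, v)).len_pos
  rcases D.pt_zero_and_pt_len h with ⟨h₀, h₁⟩ | ⟨h₀, h₁⟩ <;> rw [hlen] at h₁ <;>
    rw [h₀, zero_add, h₁] at hocti
  · exact hocti
  · exact hocti.symm

theorem exists_octiSeg_segment_subset_curve (h : G.Adj u v) :
    ∃ q ≠ D.point u, OctiSeg (D.point u) q ∧ segment ℝ (D.point u) q ⊆ D.curve u v := by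
  rcases D.pt_zero_and_pt_len h with ⟨h₀, -⟩ | ⟨-, h₁⟩
  · exact h₀ ▸ (D.octi _ h).exists_segment_pt_zero
  · exact h₁ ▸ (D.octi _ h).exists_segment_pt_len

namespace IsPlanar

variable {D} (hD : D.IsPlanar)
include hD

theorem isPreconnected_curve_diff (h : G.Adj u v) :
    IsPreconnected (D.curve u v \ {D.point u}) := by
  rcases D.pt_zero_and_pt_len h with ⟨h₀, -⟩ | ⟨-, h₁⟩
  · exact h₀ ▸ (hD.1 _ h).isPreconnected_image_diff_pt_zero
  · exact h₁ ▸ (hD.1 _ h).isPreconnected_image_diff_pt_len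

theorem point_notMem_curve (h : G.Adj u v) (hw : w ∉ s(u, v)) : D.point w ∉ D.curve u v := by
  intro hmem
  have hends : D.point w ∈ ({D.point u, D.point v} : Set (ℝ × ℝ)) :=
    (hD.2.1 u v h).subset ⟨hmem, mem_range_self w⟩
  exact hw (by simpa [D.point_injective.eq_iff] using hends)

theorem inter_curve_subset (h : G.Adj u v) (h' : G.Adj u' v') (hne : s(u, v) ≠ s(u', v')) :
    D.curve u v ∩ D.curve u' v' ⊆ D.point '' {w | w ∈ s(u, v) ∧ w ∈ s(u', v')} :=
  hD.2.2 _ h _ h' hne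

theorem disjoint_curve (h : G.Adj u v) (h' : G.Adj u' v') (hu : u' ∉ s(u, v)) (hv : v' ∉ s(u, v)) :
    Disjoint (D.curve u v) (D.curve u' v') := by
  rw [disjoint_iff_inter_eq_empty, ← subset_empty_iff]
  have hne : s(u, v) ≠ s(u', v') := fun heq ↦ hu (heq ▸ Sym2.mem_mk_left u' v')
  refine (hD.inter_curve_subset h h' hne).trans ?_
  rintro _ ⟨w, ⟨hw, hw'⟩, rfl⟩
  rcases Sym2.mem_iff.1 hw' with rfl | rfl
  · exact hu hw
  · exact hv hw

end IsPlanar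

end OctiDrawing

/-! ### Triangles drawn without bends -/

namespace OctiDrawing

variable {V : Type*} {G : SimpleGraph V} {D : OctiDrawing G} {u v w : Fin 3 → V}

/-- The closed plane triangle spanned by the points of the vertices `u 0`, `u 1`, `u 2`. -/
def triangle (D : OctiDrawing G) (u : Fin 3 → V) : Set (ℝ × ℝ) := convexHull ℝ (range (D.point ∘ u))

/-- The vertices `u 0`, `u 1`, `u 2` form a triangle of `G` whose edges are drawn without bends. -/
structure IsStraightTriangle (D : OctiDrawing G) (u : Fin 3 → V) : Prop where
  adj : Pairwise fun i j ↦ G.Adj (u i) (u j)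
  bends_eq_zero : ∀ j, (D.poly s(u j, u (j + 1))).bends = 0

theorem convex_triangle : Convex ℝ (D.triangle u) := convex_convexHull ℝ _

theorem isClosed_triangle : IsClosed (D.triangle u) := (finite_range _).isClosed_convexHull ℝ

theorem point_mem_triangle (j : Fin 3) : D.point (u j) ∈ D.triangle u :=
  subset_convexHull ℝ _ (mem_range_self j)

namespace IsStraightTriangle

variable (hu : D.IsStraightTriangle u)
include hu

theorem adj_add_one (j : Fin 3) : G.Adj (u j) (u (j + 1)) := hu.adj (by simp)

theorem curve_eq_segment (j : Fin 3) :
    D.curve (u j) (u (j + 1)) = segment ℝ (D.point (u j)) (D.point (u (j + 1))) :=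
  D.curve_eq_segment (hu.adj_add_one j) (hu.bends_eq_zero j)

theorem octiSeg (i j : Fin 3) : OctiSeg (D.point (u i)) (D.point (u j)) := by
  have hnext (j) := D.octiSeg_of_bends_eq_zero (hu.adj_add_one j) (hu.bends_eq_zero j)
  obtain rfl | rfl | rfl : i = j ∨ j = i + 1 ∨ i = j + 1 := by decide +revert
  · exact .inl (sub_self _)
  · exact hnext i
  · exact (hnext j).symm

theorem curve_subset_triangle (j : Fin 3) : D.curve (u j) (u (j + 1)) ⊆ D.triangle u := by
  rw [hu.curve_eq_segment]
  exact convex_triangle.segment_subset (point_mem_triangle j) (point_mem_triangle (j + 1))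

variable (hD : D.IsPlanar)
include hD

theorem not_collinear : ¬ Collinear ℝ (range (D.point ∘ u)) := by
  have hnot (j : Fin 3) : ¬ Wbtw ℝ (D.point (u j)) (D.point (u (j + 2))) (D.point (u (j + 1))) := by
    rw [← mem_segment_iff_wbtw, ← hu.curve_eq_segment]
    apply hD.point_notMem_curve (hu.adj_add_one j)
    have hinj {i k : Fin 3} (hik : i ≠ k) : u i ≠ u k := (hu.adj hik).ne
    simp [hinj]
  intro hcol
  have hrange : range (D.point ∘ u) = {D.point (u 0), D.point (u 2), D.point (u 1)} := by
    ext
    simp only [mem_range, Function.comp_apply, eq_comm, Fin.exists_fin_succ, Fin.isValue,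
      Fin.succ_zero_eq_one, Fin.succ_one_eq_two, IsEmpty.exists_iff, or_false, mem_insert_iff,
      mem_singleton_iff]
    tauto
  rcases (hrange ▸ hcol).wbtw_or_wbtw_or_wbtw with h | h | h
  · exact hnot 0 h
  · exact hnot 2 h
  · exact hnot 1 h

theorem exists_affineBasis : ∃ b : AffineBasis (Fin 3) ℝ (ℝ × ℝ), ⇑b = D.point ∘ u := by
  have hind : AffineIndependent ℝ (D.point ∘ u) :=
    affineIndependent_iff_not_collinear.2 (hu.not_collinear hD)
  exact ⟨⟨_, hind, hind.affineSpan_eq_top_iff_card_eq_finrank_add_one.2 (by simp)⟩, rfl⟩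

theorem interior_triangle_nonempty : (interior (D.triangle u)).Nonempty := by
  obtain ⟨b, hb⟩ := hu.exists_affineBasis hD
  exact ⟨_, by simpa [triangle, hb] using b.centroid_mem_interior_convexHull⟩

theorem frontier_triangle_subset :
    frontier (D.triangle u) ⊆ ⋃ j, D.curve (u j) (u (j + 1)) := by
  obtain ⟨b, hb⟩ := hu.exists_affineBasis hD
  simpa [triangle, hb, hu.curve_eq_segment] using frontier_convexHull_subset b

theorem disjoint_curve_interior_triangle (j : Fin 3) :
    Disjoint (D.curve (u j) (u (j + 1))) (interior (D.triangle u)) := by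
  obtain ⟨b, hb⟩ := hu.exists_affineBasis hD
  simpa [triangle, hb, hu.curve_eq_segment] using disjoint_segment_interior_convexHull b j (j + 1)

theorem point_notMem_interior_triangle (j : Fin 3) : D.point (u j) ∉ interior (D.triangle u) :=
  disjoint_left.1 (hu.disjoint_curve_interior_triangle hD j) (D.left_mem_curve (hu.adj_add_one j))

theorem curve_subset_interior_or_subset_compl {x y : V} (h : G.Adj x y) (hx : x ∉ range u)
    (hy : y ∉ range u) :
    D.curve x y ⊆ interior (D.triangle u) ∨ D.curve x y ⊆ (D.triangle u)ᶜ := by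
  refine subset_interior_or_subset_compl_of_isPreconnected (D.isPreconnected_curve x y)
    isClosed_triangle (Disjoint.mono_right (hu.frontier_triangle_subset hD) ?_)
  refine disjoint_iUnion_right.2 fun j ↦ (hD.disjoint_curve (hu.adj_add_one j) h ?_ ?_).symm
  · grind
  · grind

theorem curve_subset_interior {x y : V} (h : G.Adj x y) (hx : x ∉ range u) (hy : y ∉ range u)
    (hmem : D.point x ∈ interior (D.triangle u)) : D.curve x y ⊆ interior (D.triangle u) :=
  (hu.curve_subset_interior_or_subset_compl hD h hx hy).resolve_right
    fun hsub ↦ hsub (D.left_mem_curve h) (interior_subset hmem)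

theorem curve_subset_compl {x y : V} (h : G.Adj x y) (hx : x ∉ range u) (hy : y ∉ range u)
    (hmem : D.point x ∉ interior (D.triangle u)) : D.curve x y ⊆ (D.triangle u)ᶜ :=
  (hu.curve_subset_interior_or_subset_compl hD h hx hy).resolve_left
    fun hsub ↦ hmem (hsub (D.left_mem_curve h))

theorem leg_subset_interior_or_subset_compl {j : Fin 3} {x : V} (h : G.Adj (u j) x)
    (hx : x ∉ range u) :
    D.curve (u j) x \ {D.point (u j)} ⊆ interior (D.triangle u) ∨
      D.curve (u j) x \ {D.point (u j)} ⊆ (D.triangle u)ᶜ := by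
  refine subset_interior_or_subset_compl_of_isPreconnected (hD.isPreconnected_curve_diff h)
    isClosed_triangle (Disjoint.mono_right (hu.frontier_triangle_subset hD) ?_)
  refine disjoint_iUnion_right.2 fun i ↦ disjoint_left.2 fun z hz hz' ↦ ?_
  have hne : s(u j, x) ≠ s(u i, u (i + 1)) := by grind
  obtain ⟨w, ⟨hw, hw'⟩, rfl⟩ := hD.inter_curve_subset h (hu.adj_add_one i) hne ⟨hz.1, hz'⟩
  rcases Sym2.mem_iff.1 hw with rfl | rfl
  · exact hz.2 rfl
  · grind

theorem exists_point_notMem_triangle :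
    ∃ j, ∀ x ∉ range u, G.Adj (u j) x → D.point x ∉ D.triangle u := by
  obtain ⟨b, hb⟩ := hu.exists_affineBasis hD
  obtain ⟨j, hj⟩ := exists_re_div_ne_zero b
  refine ⟨j, fun x hx h hmem ↦ ?_⟩
  have hx_leg : D.point x ∈ D.curve (u j) x \ {D.point (u j)} :=
    ⟨D.right_mem_curve h, fun heq ↦ h.ne' (D.point_injective heq)⟩
  have hleg := (hu.leg_subset_interior_or_subset_compl hD h hx).resolve_right
    fun hsub ↦ hsub hx_leg hmem
  obtain ⟨q, hqne, hq, hsub⟩ := D.exists_octiSeg_segment_subset_curve h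
  have hqint := hleg ⟨hsub (right_mem_segment ℝ _ _), hqne⟩
  refine notMem_interior_of_octiSeg b (fun i k ↦ ?_) hj (q := q) ?_ ?_
  · simpa [hb] using hu.octiSeg i k
  · simpa [hb] using hq
  · simpa [triangle, hb] using hqint

end IsStraightTriangle

end OctiDrawing

/-! ### Prisms around a triangle drawn without bends -/

/-- The triangles `u` and `v` of `G`, joined by the legs from `u j` to `v j`, form a prism. -/
structure IsPrism {V : Type*} (G : SimpleGraph V) (u v : Fin 3 → V) : Prop where
  adj_left : Pairwise fun i j ↦ G.Adj (u i) (u j)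
  adj_right : Pairwise fun i j ↦ G.Adj (v i) (v j)
  adj_leg : ∀ j, G.Adj (u j) (v j)
  disjoint : Disjoint (range u) (range v)

theorem IsPrism.notMem_range {V : Type*} {G : SimpleGraph V} {u v : Fin 3 → V}
    (h : IsPrism G u v) (j : Fin 3) : v j ∉ range u :=
  disjoint_right.1 h.disjoint (mem_range_self j)

namespace OctiDrawing

variable {V : Type*} {G : SimpleGraph V} {D : OctiDrawing G} {u v w : Fin 3 → V}

/-- For a point `g` inside the drawn triangle `u`, a connected set that joins `g` to the triangle
`v` and meets the edges of the prism only in the leg at `u k` and in the triangle `v`. -/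
noncomputable def link (D : OctiDrawing G) (u v : Fin 3 → V) (g : ℝ × ℝ) (k : Fin 3) :
    Set (ℝ × ℝ) :=
  segment ℝ g (D.point (u k)) ∪ (D.curve (u k) (v k) ∪ (D.curve (v 0) (v 1) ∪ D.curve (v 1) (v 2)))

theorem left_mem_link (g : ℝ × ℝ) (k : Fin 3) : g ∈ D.link u v g k := .inl (left_mem_segment ℝ _ _)

theorem point_mem_link (h : IsPrism G u v) (g : ℝ × ℝ) (k : Fin 3) :
    D.point (v 0) ∈ D.link u v g k :=
  .inr (.inr (.inl (D.left_mem_curve (h.adj_right (by decide)))))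

theorem isPreconnected_link (h : IsPrism G u v) (g : ℝ × ℝ) (k : Fin 3) :
    IsPreconnected (D.link u v g k) := by
  have h01 : G.Adj (v 0) (v 1) := h.adj_right (by decide)
  have h12 : G.Adj (v 1) (v 2) := h.adj_right (by decide)
  have hring : IsPreconnected (D.curve (v 0) (v 1) ∪ D.curve (v 1) (v 2)) :=
    (D.isPreconnected_curve _ _).union _ (D.right_mem_curve h01) (D.left_mem_curve h12)
      (D.isPreconnected_curve _ _)
  have hmem : D.point (v k) ∈ D.curve (v 0) (v 1) ∪ D.curve (v 1) (v 2) := by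
    fin_cases k
    · exact .inl (D.left_mem_curve h01)
    · exact .inl (D.right_mem_curve h01)
    · exact .inr (D.right_mem_curve h12)
  exact (convex_segment _ _).isPreconnected.union _ (right_mem_segment ℝ _ _)
    (.inl (D.left_mem_curve (h.adj_leg k)))
    ((D.isPreconnected_curve _ _).union _ (D.right_mem_curve (h.adj_leg k)) hmem hring)

theorem link_subset_compl_curve (hD : D.IsPlanar) (h : IsPrism G u v) {g : ℝ × ℝ}
    (hg : g ∈ interior (D.triangle u)) {k : Fin 3} {x y : V} (hxy : G.Adj x y)
    (hint : Disjoint (D.curve x y) (interior (D.triangle u))) (hk : u k ∉ s(x, y))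
    (hv : ∀ i, v i ∉ s(x, y)) : D.link u v g k ⊆ (D.curve x y)ᶜ := by
  have hsegment : Disjoint (segment ℝ g (D.point (u k))) (D.curve x y) :=
    (disjoint_insert_left.2 ⟨hD.point_notMem_curve hxy hk, hint.symm⟩).mono_left
      (segment_subset_insert_interior convex_triangle hg (point_mem_triangle k))
  simp only [link, subset_compl_iff_disjoint_right, disjoint_union_left]
  exact ⟨hsegment, (hD.disjoint_curve hxy (h.adj_leg k) hk (hv k)).symm,
    (hD.disjoint_curve hxy (h.adj_right (by decide)) (hv 0) (hv 1)).symm,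
    (hD.disjoint_curve hxy (h.adj_right (by decide)) (hv 1) (hv 2)).symm⟩

namespace IsStraightTriangle

variable (hu : D.IsStraightTriangle u) (hD : D.IsPlanar)
include hu hD

theorem point_notMem_triangle (h : IsPrism G u v) (j : Fin 3) : D.point (v j) ∉ D.triangle u := by
  obtain ⟨i, hi⟩ := hu.exists_point_notMem_triangle hD
  have hout := hi (v i) (h.notMem_range i) (h.adj_leg i)
  rcases eq_or_ne i j with rfl | hij
  · exact hout
  · exact hu.curve_subset_compl hD (h.adj_right hij) (h.notMem_range i) (h.notMem_range j)
      (fun hin ↦ hout (interior_subset hin)) (D.right_mem_curve (h.adj_right hij))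

theorem disjoint_leg_interior {j : Fin 3} {x : V} (h : G.Adj (u j) x) (hx : x ∉ range u)
    (hmem : D.point x ∉ interior (D.triangle u)) :
    Disjoint (D.curve (u j) x) (interior (D.triangle u)) := by
  have hne : D.point x ≠ D.point (u j) := fun heq ↦ h.ne' (D.point_injective heq)
  have hleg := (hu.leg_subset_interior_or_subset_compl hD h hx).resolve_left
    fun hsub ↦ hmem (hsub ⟨D.right_mem_curve h, hne⟩)
  rw [sdiff_subset_iff, singleton_union] at hleg
  exact (disjoint_insert_left.2 ⟨hu.point_notMem_interior_triangle hD j,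
    disjoint_compl_left.mono_right interior_subset⟩).mono_left hleg

theorem sum_seenAngle_eq_of_mem_interior (hv : IsPrism G u v) (hw : IsPrism G u w)
    (hvw : Disjoint (range v) (range w)) (hout : ∀ j, D.point (w j) ∉ interior (D.triangle u))
    {g : ℝ × ℝ} (hg : g ∈ interior (D.triangle u)) :
    ∑ j, seenAngle (D.point (u j)) (D.point (u (j + 1))) g =
      ∑ j, seenAngle (D.point (u j)) (D.point (u (j + 1))) (D.point (v 0)) := by
  have hring (j) : G.Adj (w j) (w (j + 1)) := hw.adj_right (by simp)
  choose E hE using fun j ↦ D.exists_isAngleLiftOn_compl_curve (hw.adj_leg j)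
  choose F hF using fun j ↦ D.exists_isAngleLiftOn_compl_curve (hring j)
  have hinj {i j : Fin 3} (hij : i ≠ j) : u i ≠ u j := (hw.adj_left hij).ne
  have huv (i j) : v i ≠ u j := fun h ↦ hv.notMem_range i ⟨j, h.symm⟩
  have huw (i j) : u i ≠ w j := fun h ↦ hw.notMem_range j ⟨i, h⟩
  have hvw' (i j) : v i ≠ w j := hvw.ne_of_mem (mem_range_self i) (mem_range_self j)
  have hleg {j k : Fin 3} (hkj : k ≠ j) :
      IsAngleLiftOn (D.link u v g k) (dirAngle (D.point (w j)) - dirAngle (D.point (u j))) (E j) :=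
    (hE j).mono <| link_subset_compl_curve hD hv hg (hw.adj_leg j)
      (hu.disjoint_leg_interior hD (hw.adj_leg j) (hw.notMem_range j) (hout j))
      (by simp [huw, hinj hkj]) (by simp [huv, hvw'])
  refine IsAngleLiftOn.sum_apply_eq (Equiv.addRight 1) (E := E) (F := F)
    (a := fun j ↦ dirAngle (D.point (u j))) (b := fun j ↦ dirAngle (D.point (w j)))
    (K := fun j ↦ D.link u v g (j + 2)) (fun j ↦ isPreconnected_link hv g _)
    (fun j ↦ hleg (by simp)) (fun j ↦ hleg (by simp)) (fun j i ↦ ?_) (fun j ↦ ?_)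
    (fun j ↦ left_mem_link g _) (fun j ↦ point_mem_link hv g _)
  · have hcompl := hu.curve_subset_compl hD (hring i) (hw.notMem_range i)
      (hw.notMem_range (i + 1)) (hout i)
    exact (hF i).mono <| link_subset_compl_curve hD hv hg (hring i)
      ((disjoint_compl_left.mono_right interior_subset).mono_left hcompl)
      (by simp [huw]) (by simp [hvw'])
  · refine (isAngleLiftOn_seenAngle _ _).mono ?_
    rw [Equiv.coe_addRight, ← hu.curve_eq_segment j]
    exact link_subset_compl_curve hD hv hg (hu.adj_add_one j)
      (hu.disjoint_curve_interior_triangle hD j) (by simp [hinj]) (by simp [huv])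

theorem point_mem_interior (hv : IsPrism G u v) (hw : IsPrism G u w)
    (hvw : Disjoint (range v) (range w)) (j : Fin 3) :
    D.point (w j) ∈ interior (D.triangle u) := by
  by_contra hj
  have hout (i) : D.point (w i) ∉ interior (D.triangle u) := by
    rcases eq_or_ne j i with rfl | hji
    · exact hj
    · intro hi
      exact hu.curve_subset_compl hD (hw.adj_right hji) (hw.notMem_range j) (hw.notMem_range i) hj
        (D.right_mem_curve (hw.adj_right hji)) (interior_subset hi)
  obtain ⟨b, hb⟩ := hu.exists_affineBasis hD
  obtain ⟨g, hg⟩ := hu.interior_triangle_nonempty hD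
  have hzero := sum_seenAngle_eq_zero_of_notMem_convexHull (Equiv.addRight 1)
    (hu.point_notMem_triangle hD hv 0)
  refine sum_seenAngle_ne_zero_of_mem_interior b (by simpa [triangle, hb] using hg) ?_
  simp only [hb]
  exact (hu.sum_seenAngle_eq_of_mem_interior hD hv hw hvw hout hg).trans hzero

end IsStraightTriangle

end OctiDrawing

/-! ### Bent edges in stacks of triangles -/

theorem exists_isCycle_of_pairwise_adj {V : Type*} {G : SimpleGraph V} {u : Fin 3 → V}
    (hu : Pairwise fun i j ↦ G.Adj (u i) (u j)) :
    ∃ C : G.Walk (u 0) (u 0), C.IsCycle ∧ (∀ x ∈ C.support, x ∈ range u) ∧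
      {e | e ∈ C.edges} = range fun j ↦ s(u j, u (j + 1)) := by
  have hinj {i j : Fin 3} (hij : i ≠ j) : u i ≠ u j := (hu hij).ne
  have h01 : G.Adj (u 0) (u 1) := hu (by decide)
  have h12 : G.Adj (u 1) (u 2) := hu (by decide)
  have h20 : G.Adj (u 2) (u 0) := hu (by decide)
  refine ⟨.cons h01 (.cons h12 (.cons h20 .nil)), ?_, by simp, ?_⟩
  · simp [SimpleGraph.Walk.cons_isCycle_iff, SimpleGraph.Walk.cons_isPath_iff, hinj]
  · ext e
    simp [Fin.exists_fin_succ, eq_comm]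

namespace OctiDrawing

variable {V : Type*} {G : SimpleGraph V} {D : OctiDrawing G}

theorem card_le_totalBends [Fintype V] {ι : Type*} [Fintype ι] {e : ι → Sym2 V}
    (he : e.Injective) (hmem : ∀ i, e i ∈ G.edgeSet) (hbends : ∀ i, (D.poly (e i)).bends ≠ 0) :
    Fintype.card ι ≤ D.totalBends := by
  classical
  calc Fintype.card ι = ∑ _i : ι, 1 := by simp
    _ ≤ ∑ i, (D.poly (e i)).bends :=
      Finset.sum_le_sum fun i _ ↦ Nat.one_le_iff_ne_zero.2 (hbends i)
    _ = ∑ x ∈ Finset.univ.image e, (D.poly x).bends :=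
      (Finset.sum_image (f := fun x ↦ (D.poly x).bends) he.injOn).symm
    _ ≤ D.totalBends := Finset.sum_le_sum_of_subset fun x hx ↦ by
      obtain ⟨i, -, rfl⟩ := Finset.mem_image.1 hx
      simpa using hmem i

end OctiDrawing


namespace prismStack

variable {V : Type*} {G : SimpleGraph V} {D : OctiDrawing G} {n : ℕ}

theorem pairwise_adj_row {m : ℕ} (φ : (prismStack m).Copy G) (i : Fin m) :
    Pairwise fun j k ↦ G.Adj (φ (i, j)) (φ (i, k)) :=
  fun j k hjk ↦ φ.toHom.map_adj (by simpa [SimpleGraph.boxProd_adj] using hjk)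

theorem disjoint_range_row {m : ℕ} (φ : (prismStack m).Copy G) {i k : Fin m} (h : i ≠ k) :
    Disjoint (range fun j ↦ φ (i, j)) (range fun j ↦ φ (k, j)) := by
  rw [Set.disjoint_left]
  rintro _ ⟨j, rfl⟩ ⟨l, hl⟩
  exact h (Prod.ext_iff.1 (φ.injective hl)).1.symm

theorem isPrism {m : ℕ} (φ : (prismStack m).Copy G) {i k : Fin m}
    (h : (SimpleGraph.pathGraph m).Adj i k) :
    IsPrism G (fun j ↦ φ (i, j)) (fun j ↦ φ (k, j)) where
  adj_left := pairwise_adj_row φ i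
  adj_right := pairwise_adj_row φ k
  adj_leg j := φ.toHom.map_adj (by simpa [SimpleGraph.boxProd_adj] using h)
  disjoint := disjoint_range_row φ h.ne

theorem adj_castSucc_succ (i : Fin n) :
    (SimpleGraph.pathGraph (n + 1)).Adj i.castSucc i.succ := by
  simp [SimpleGraph.pathGraph_adj]

variable (φ : (prismStack (n + 1)).Copy G) (hD : D.IsPlanar)
include hD

theorem point_mem_interior_of_lt {i : Fin n}
    (hi : D.IsStraightTriangle fun j ↦ φ (i.castSucc, j)) {k : Fin (n + 1)} (hk : k < i.castSucc)
    (j : Fin 3) : D.point (φ (k, j)) ∈ interior (D.triangle fun j ↦ φ (i.castSucc, j)) := by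
  induction k using Fin.reverseInduction with
  | last => exact absurd hk (Fin.le_last _).not_gt
  | cast k ih =>
    rcases (Fin.castSucc_lt_iff_succ_le.1 hk).eq_or_lt with heq | hlt
    · refine hi.point_mem_interior hD (isPrism φ (adj_castSucc_succ i))
        (isPrism φ (heq ▸ (adj_castSucc_succ k).symm))
        (disjoint_range_row φ (hk.trans Fin.castSucc_lt_succ).ne') j
    · have hleg := (isPrism φ (adj_castSucc_succ k).symm).adj_leg j
      have hrow {l} (hl : l < i.castSucc) := (disjoint_range_row φ hl.ne).notMem_of_mem_left
        (mem_range_self j)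
      exact hi.curve_subset_interior hD hleg (hrow hlt) (hrow hk) (ih hlt)
        (D.right_mem_curve hleg)

theorem edgesImage_subset_triangle {i : Fin n}
    (hi : D.IsStraightTriangle fun j ↦ φ (i.castSucc, j)) :
    edgesImage D (range fun j ↦ s(φ (0, j), φ (0, j + 1))) ⊆
      D.triangle fun j ↦ φ (i.castSucc, j) := by
  have hring (j : Fin 3) : D.curve (φ (0, j)) (φ (0, j + 1)) ⊆
      D.triangle fun j ↦ φ (i.castSucc, j) := by
    rcases (Fin.zero_le i.castSucc).eq_or_lt with h0 | hpos
    · rw [h0]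
      exact hi.curve_subset_triangle j
    · have hrow (l) := (disjoint_range_row φ hpos.ne).notMem_of_mem_left (mem_range_self l)
      exact (hi.curve_subset_interior hD (pairwise_adj_row φ 0 (by simp)) (hrow j) (hrow (j + 1))
        (point_mem_interior_of_lt φ hD hi hpos j)).trans interior_subset
  simpa [edgesImage, curve] using hring

theorem not_isStraightTriangle
    (hinside : ∀ (i : Fin n) (j : Fin 3), D.point (φ (i.succ, j)) ∈
      interiorOf D (range fun j ↦ s(φ (0, j), φ (0, j + 1)))) (i : Fin n) :
    ¬ D.IsStraightTriangle fun j ↦ φ (i.castSucc, j) := fun hi ↦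
  not_isBounded_connectedComponentIn_compl convex_triangle ⟨_, point_mem_triangle 0⟩
    (edgesImage_subset_triangle φ hD hi)
    (hi.point_notMem_triangle hD (isPrism φ (adj_castSucc_succ i)) 0) (hinside i 0).2

theorem le_totalBends [Fintype V]
    (hinside : ∀ (i : Fin n) (j : Fin 3), D.point (φ (i.succ, j)) ∈
      interiorOf D (range fun j ↦ s(φ (0, j), φ (0, j + 1)))) : n ≤ D.totalBends := by
  have hbent (i : Fin n) : ∃ j : Fin 3,
      (D.poly s(φ (i.castSucc, j), φ (i.castSucc, j + 1))).bends ≠ 0 := by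
    by_contra! hstraight
    exact not_isStraightTriangle φ hD hinside i ⟨pairwise_adj_row φ _, hstraight⟩
  choose j hj using hbent
  have hinj : Function.Injective fun i ↦ s(φ (i.castSucc, j i), φ (i.castSucc, j i + 1)) := by
    intro i k hik
    rcases Sym2.eq_iff.1 hik with ⟨h, -⟩ | ⟨h, -⟩ <;>
      exact Fin.castSucc_injective n (Prod.ext_iff.1 (φ.injective h)).1
  simpa using D.card_le_totalBends hinj (fun i ↦ pairwise_adj_row φ _ (by simp)) hj

end prismStack

end

/-- For every `m ≥ 2` there exist a triconnected planar simple graph `G`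
with maximum degree at most `4` on `n = 3m` vertices and a cycle `C` in `G` such that every
planar octilinear drawing of `G` placing all vertices not on `C` in the interior of `C`
has at least `n/3 - 1 = m - 1` bends in total. -/
theorem exists_deg4_graph_with_bend_lower_bound (m : ℕ) (hm : 2 ≤ m) :
    ∃ G : SimpleGraph (Fin (3 * m)),
      Triconnected G ∧ GraphPlanar G ∧ MaxDegLE G 4 ∧
      ∃ (v : Fin (3 * m)) (C : G.Walk v v), C.IsCycle ∧
        ∀ D : OctiDrawing G, D.IsPlanar →
          (∀ w, w ∉ C.support → toR (D.pos w) ∈ interiorOf D {e | e ∈ C.edges}) →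
          m - 1 ≤ D.totalBends := by
  obtain ⟨n, rfl⟩ : ∃ n, m = n + 1 := ⟨m - 1, by omega⟩
  have hcard : Fintype.card (Fin (n + 1) × Fin 3) = 3 * (n + 1) := by simp [mul_comm]
  let φ : prismStack (n + 1) ≃g (prismStack (n + 1)).overFin hcard :=
    (prismStack (n + 1)).overFinIso hcard
  have hdeg : MaxDegLE (prismStack (n + 1)) 4 :=
    (MaxDegLE.pathGraph (n + 1)).boxProd (MaxDegLE.top (Fin 3))
  obtain ⟨C, hC, hsupport, hedges⟩ :=
    exists_isCycle_of_pairwise_adj (prismStack.pairwise_adj_row φ.toCopy 0)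
  refine ⟨_, (Triconnected.prismStack hm).of_iso φ,
    (GraphPlanar.prismStack (n + 1)).of_copy φ.symm.toCopy, hdeg.of_iso φ, _, C, hC,
    fun D hD hinside ↦ ?_⟩
  refine prismStack.le_totalBends φ.toCopy hD fun i j ↦ hedges ▸ hinside _ fun hmem ↦ ?_
  exact (prismStack.disjoint_range_row φ.toCopy i.succ_ne_zero).notMem_of_mem_left
    (Set.mem_range_self j) (hsupport _ hmem)
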